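/- Theorem 1.2 (exponential case). Let α ∈ (0,1), d₁, d₂ > 0 and c₁, c₂ ∈ ℝ with c₁ ≠ c₂. Assume f₁, f₂, g₁, g₂ : ℝ² → ℝ are C^{2,α} and there exist constants C₀ > 1 and r₀ > 0 such that for all |u|, |v| ≤ r₀: |f₁(u,v)| ≤ C₀(|u|⁴ + |u||v|), |g₁(u,v)| ≤ C₀(|u|² + |u||v|), |f₂(u,v)| ≤ C₀(|v|⁴ + |u||v|), |g₂(u,v)| ≤ C₀(|v|² + |u||v|). Then there exists M₀ ≥ 1 such that for every M ≥ M₀ and every ε > 0 there exists δ > 0 with the following property: for every pair (u₀, v₀) of bounded, α-Hölder continuous functions ℝ → ℝ satisfying |u₀(x)| e^{x²/M} < δ and |v₀(x)| e^{x²/M} < δ for all x ∈ ℝ, there exists a global classical solution (u,v) of system (GRD) with initial data (u₀, v₀) such that for all x ∈ ℝ and t ≥ 0: |u(x,t)| ≤ ε e^{-(x+c₁t)²/(M(1+t))}/√(1+t), |v(x,t)| ≤ ε e^{-(x+c₂t)²/(M(1+t))}/√(1+t), sup_{x∈ℝ}(|u(x,t)| + |v(x,t)|) ≤ ε/√(1+t),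 and ∫_ℝ (|u(x,t)| + |v(x,t)|) dx ≤ ε. -/

import Mathlib

open MeasureTheory Set

noncomputable section

/-- `f` is `α`-Hölder continuous. -/
def HolderCont (α : ℝ) (f : ℝ → ℝ) : Prop :=
  ∃ C : ℝ, ∀ x y : ℝ, |f x - f y| ≤ C * |x - y| ^ α

/-- `h : ℝ² → ℝ` is `C^{2,α}`: twice continuously differentiable with `α`-Hölder
continuous second-order derivatives. -/
def IsC2Holder (α : ℝ) (h : ℝ × ℝ → ℝ) : Prop :=
  ContDiff ℝ 2 h ∧
    ∃ C : ℝ, ∀ x y : ℝ × ℝ,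
      ‖iteratedFDeriv ℝ 2 h x - iteratedFDeriv ℝ 2 h y‖ ≤ C * ‖x - y‖ ^ α

/-- A classical solution of the reaction-diffusion-advection system (GRD)
`u_t = d₁ u_xx + c₁ u_x + f₁(u,v) + ∂_x(g₁(u,v))`,
`v_t = d₂ v_xx + c₂ v_x + f₂(u,v) + ∂_x(g₂(u,v))`
on `ℝ × [0,T)` with initial data `(u₀, v₀)`: jointly continuous, bounded in `x` on
each compact time interval, once continuously differentiable in `t` and twice
continuously differentiable in `x` on `ℝ × (0,T)`, satisfying both equations
pointwise there, and attaining the initial data at `t = 0`. -/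
def IsClassicalSolution (d₁ d₂ c₁ c₂ : ℝ) (f₁ f₂ g₁ g₂ : ℝ × ℝ → ℝ)
    (T : ENNReal) (u₀ v₀ : ℝ → ℝ) (u v : ℝ → ℝ → ℝ) : Prop :=
  (∀ x : ℝ, u x 0 = u₀ x) ∧ (∀ x : ℝ, v x 0 = v₀ x) ∧
  ContinuousOn (fun p : ℝ × ℝ => (u p.1 p.2, v p.1 p.2))
    {p : ℝ × ℝ | 0 ≤ p.2 ∧ ENNReal.ofReal p.2 < T} ∧
  (∀ t₁ : ℝ, 0 ≤ t₁ → ENNReal.ofReal t₁ < T →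
    ∃ K : ℝ, ∀ x t : ℝ, 0 ≤ t → t ≤ t₁ → |u x t| + |v x t| ≤ K) ∧
  ∃ ut vt ux vx uxx vxx gx hx : ℝ → ℝ → ℝ,
    (∀ x t : ℝ, 0 < t → ENNReal.ofReal t < T →
      HasDerivAt (fun τ => u x τ) (ut x t) t ∧
      HasDerivAt (fun ξ => u ξ t) (ux x t) x ∧
      HasDerivAt (fun ξ => ux ξ t) (uxx x t) x ∧
      HasDerivAt (fun ξ => g₁ (u ξ t, v ξ t)) (gx x t) x ∧
      HasDerivAt (fun τ => v x τ) (vt x t) t ∧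
      HasDerivAt (fun ξ => v ξ t) (vx x t) x ∧
      HasDerivAt (fun ξ => vx ξ t) (vxx x t) x ∧
      HasDerivAt (fun ξ => g₂ (u ξ t, v ξ t)) (hx x t) x ∧
      ut x t = d₁ * uxx x t + c₁ * ux x t + f₁ (u x t, v x t) + gx x t ∧
      vt x t = d₂ * vxx x t + c₂ * vx x t + f₂ (u x t, v x t) + hx x t) ∧
    ContinuousOn (fun p : ℝ × ℝ =>
        (ut p.1 p.2, ux p.1 p.2, uxx p.1 p.2, vt p.1 p.2, vx p.1 p.2, vxx p.1 p.2))
      {p : ℝ × ℝ | 0 < p.2 ∧ ENNReal.ofReal p.2 < T}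

namespace HK
open Real Filter Topology

/-- heat kernel profiles -/
def ker (d : ℝ) : ℕ → ℝ → ℝ
  | 0, z => (√(4 * π * d))⁻¹ * exp (-z ^ 2 / (4 * d))
  | 1, z => z / (2 * d) * ((√(4 * π * d))⁻¹ * exp (-z ^ 2 / (4 * d)))
  | _, z => (z ^ 2 / (4 * d ^ 2) - 1 / (2 * d)) * ((√(4 * π * d))⁻¹ * exp (-z ^ 2 / (4 * d)))

lemma ker_cont (d : ℝ) (k : ℕ) : Continuous (ker d k) := by
  match k with
  | 0 => unfold ker; fun_prop
  | 1 => unfold ker; fun_prop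
  | (n+2) => unfold ker; fun_prop

lemma ker_deriv {d : ℝ} (hd : 0 < d) {k : ℕ} (hk : k ≤ 1) (z : ℝ) :
    HasDerivAt (ker d k) (-ker d (k+1) z) z := by
  have hE : HasDerivAt (fun z : ℝ => (√(4 * π * d))⁻¹ * exp (-z ^ 2 / (4 * d)))
      ((√(4 * π * d))⁻¹ * (exp (-z ^ 2 / (4 * d)) * (-(2 * z) / (4 * d)))) z := by
    have h1 : HasDerivAt (fun z : ℝ => -z ^ 2 / (4 * d)) (-(2 * z) / (4 * d)) z := by
      have := ((hasDerivAt_pow 2 z).neg).div_const (4 * d)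
      simpa using this
    exact (h1.exp).const_mul _
  interval_cases k
  · have : HasDerivAt (ker d 0) _ z := hE
    convert this using 1
    simp only [ker]; field_simp; ring
  · have h2 : HasDerivAt (ker d 1) _ z := ((hasDerivAt_id z).div_const (2*d)).mul hE
    convert h2 using 1
    simp only [ker, id]; field_simp; ring

lemma ker_bound {d : ℝ} (hd : 0 < d) (k : ℕ) :
    ∃ C : ℝ, 0 < C ∧ ∀ z, |ker d k z| ≤ C * exp (-(1 / (8 * d)) * z ^ 2) := by
  set c := (√(4 * π * d))⁻¹ with hc
  have hc0 : 0 < c := by positivity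
  have hsplit : ∀ z : ℝ, exp (-z ^ 2 / (4 * d)) =
      exp (-(1 / (8 * d)) * z ^ 2) * exp (-(1 / (8 * d)) * z ^ 2) := by
    intro z; rw [← exp_add]; congr 1; field_simp; ring
  have h1 : ∀ z : ℝ, exp (-(1 / (8 * d)) * z ^ 2) ≤ 1 := by
    intro z; rw [exp_le_one_iff]
    have : 0 ≤ 1 / (8*d) * z^2 := by positivity
    linarith
  have h2 : ∀ z : ℝ, z ^ 2 * exp (-(1 / (8 * d)) * z ^ 2) ≤ 8 * d := by
    intro z
    have h3 : 1 / (8 * d) * z ^ 2 ≤ exp (1 / (8 * d) * z ^ 2) := by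
      have := add_one_le_exp (1 / (8 * d) * z ^ 2); linarith
    have h4 : exp (-(1 / (8 * d)) * z ^ 2) * exp (1 / (8 * d) * z ^ 2) = 1 := by
      rw [← exp_add]; simp
    have h5 : 0 < exp (-(1 / (8 * d)) * z ^ 2) := exp_pos _
    have h6 : z^2 = 8 * d * (1 / (8 * d) * z ^ 2) := by field_simp
    calc z ^ 2 * exp (-(1 / (8 * d)) * z ^ 2) = 8 * d * (1 / (8 * d) * z ^ 2) * exp (-(1 / (8 * d)) * z ^ 2) := by rw [← h6]
      _ ≤ 8 * d * exp (1 / (8 * d) * z ^ 2) * exp (-(1 / (8 * d)) * z ^ 2) := by gcongr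
      _ = 8 * d := by rw [mul_assoc, mul_comm (exp (1 / (8 * d) * z ^ 2)), h4, mul_one]
  match k with
  | 0 =>
    refine ⟨c, hc0, fun z => ?_⟩
    simp only [ker]
    rw [abs_of_pos (by positivity), hsplit]
    have := h1 z
    have h5 : 0 < exp (-(1 / (8 * d)) * z ^ 2) := exp_pos _
    rw [← hc]
    gcongr
    nlinarith
  | 1 =>
    refine ⟨(1 + 8 * d) / (2 * d) * c, by positivity, fun z => ?_⟩
    simp only [ker]
    rw [← hc, abs_mul, abs_of_pos (a := c * _) (by positivity), hsplit, abs_div, abs_of_pos (a := 2 * d) (by positivity)]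
    have h5 : 0 < exp (-(1 / (8 * d)) * z ^ 2) := exp_pos _
    set e := exp (-(1 / (8 * d)) * z ^ 2)
    have h7 : |z| * e ≤ 1 + 8 * d := by
      have : |z| ≤ 1 + z ^ 2 := by nlinarith [sq_abs z, abs_nonneg z, sq_nonneg (|z| - 1)]
      have h8 := h2 z
      have h9 := h1 z
      nlinarith
    calc |z| / (2 * d) * (c * (e * e)) = (|z| * e) / (2 * d) * c * e := by ring
      _ ≤ (1 + 8 * d) / (2 * d) * c * e := by gcongr
  | (n+2) =>
    refine ⟨((8 * d) / (4 * d ^ 2) + 1 / (2 * d)) * c, by positivity, fun z => ?_⟩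
    simp only [ker]
    rw [← hc, abs_mul, abs_of_pos (a := c * _) (by positivity), hsplit]
    have h5 : 0 < exp (-(1 / (8 * d)) * z ^ 2) := exp_pos _
    have h8 := h2 z
    have h9 := h1 z
    set e := exp (-(1 / (8 * d)) * z ^ 2)
    have h10 : |z ^ 2 / (4 * d ^ 2) - 1 / (2 * d)| ≤ z ^ 2 / (4 * d ^ 2) + 1 / (2 * d) := by
      have ha : 0 ≤ z ^ 2 / (4 * d ^ 2) := by positivity
      have hb : 0 ≤ 1 / (2 * d) := by positivity
      rw [abs_le]; constructor <;> linarith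
    calc |z ^ 2 / (4 * d ^ 2) - 1 / (2 * d)| * (c * (e * e))
        ≤ (z ^ 2 / (4 * d ^ 2) + 1 / (2 * d)) * (c * (e * e)) := by gcongr
      _ = ((z ^ 2 * e) / (4 * d ^ 2) + 1 / (2 * d) * e) * c * e := by ring
      _ ≤ ((8 * d) / (4 * d ^ 2) + 1 / (2 * d) * 1) * c * e := by gcongr
      _ = _ := by ring

lemma ker_integrable {d : ℝ} (hd : 0 < d) (k : ℕ) : Integrable (ker d k) := by
  obtain ⟨C, hC, h⟩ := ker_bound hd k
  refine ((integrable_exp_neg_mul_sq (b := 1 / (8*d)) (by positivity)).const_mul C).mono'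
    (ker_cont d k).aestronglyMeasurable (ae_of_all _ h)

lemma ker_rpow_integrable {d α : ℝ} (hd : 0 < d) (hα : 0 < α) (k : ℕ) :
    Integrable (fun z => |z| ^ α * |ker d k z|) := by
  obtain ⟨C, hC, h⟩ := ker_bound hd k
  have h1 := (integrable_rpow_mul_exp_neg_mul_sq (b := 1 / (8*d)) (by positivity) (s := α) (by linarith)).norm.const_mul C
  have h2 := (integrable_rpow_mul_exp_neg_mul_sq (b := 1 / (8*d)) (by positivity) (s := α) (by linarith)).comp_neg.norm.const_mul C
  refine (h1.add h2).mono' ?_ (ae_of_all _ fun z => ?_)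
  · refine Continuous.aestronglyMeasurable ?_
    have := ker_cont d k
    exact (continuous_abs.rpow_const (fun _ => Or.inr hα.le)).mul this.abs
  · simp only [Pi.add_apply, norm_mul, Real.norm_eq_abs, abs_abs, even_two, Even.neg_pow]
    rw [abs_of_nonneg (rpow_nonneg (abs_nonneg z) α), abs_of_pos (exp_pos _)]
    have h5 : 0 < exp (-(1 / (8 * d)) * z ^ 2) := exp_pos _
    rcases le_total 0 z with hz | hz
    · rw [abs_of_nonneg hz, abs_of_nonneg (rpow_nonneg hz α)]
      calc z ^ α * |ker d k z| ≤ z ^ α * (C * exp (-(1 / (8 * d)) * z ^ 2)) := by gcongr; exact h z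
        _ = C * (z ^ α * exp (-(1 / (8 * d)) * z ^ 2)) := by ring
        _ ≤ _ := by simp only [le_add_iff_nonneg_right]; positivity
    · rw [abs_of_nonpos hz, abs_of_nonneg (a := (-z)^α) (rpow_nonneg (by linarith) α)]
      calc (-z) ^ α * |ker d k z| ≤ (-z) ^ α * (C * exp (-(1 / (8 * d)) * z ^ 2)) := by
            gcongr
            · exact rpow_nonneg (by linarith) _
            · exact h z
        _ = C * ((-z) ^ α * exp (-(1 / (8 * d)) * z ^ 2)) := by ring
        _ ≤ _ := by simp only [le_add_iff_nonneg_left]; positivity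

lemma ker_zero_integral {d : ℝ} (hd : 0 < d) : ∫ z, ker d 0 z = 1 := by
  have h := integral_gaussian (1 / (4 * d))
  simp only [ker]
  rw [integral_const_mul]
  have : (fun z : ℝ => exp (-z ^ 2 / (4 * d))) = fun z => exp (-(1 / (4 * d)) * z ^ 2) := by
    ext z; congr 1; ring
  rw [this, h]
  have : π / (1 / (4 * d)) = 4 * π * d := by field_simp
  rw [this]
  have : 0 < √(4 * π * d) := by positivity
  field_simp

lemma gauss_tendsto {b : ℝ} (hb : 0 < b) :
    Tendsto (fun z : ℝ => exp (-b * z ^ 2)) (cocompact ℝ) (𝓝 0) := by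
  have := tendsto_rpow_abs_mul_exp_neg_mul_sq_cocompact hb 0
  simpa using this

lemma ker_tendsto {d : ℝ} (hd : 0 < d) (k : ℕ) : Tendsto (ker d k) (cocompact ℝ) (𝓝 0) := by
  obtain ⟨C, hC, h⟩ := ker_bound hd k
  refine squeeze_zero_norm h ?_
  simpa using (gauss_tendsto (b := 1 / (8*d)) (by positivity)).const_mul C

lemma ker_succ_integral {d : ℝ} (hd : 0 < d) {k : ℕ} (hk : k ≤ 1) : ∫ z, ker d (k+1) z = 0 := by
  have h := integral_of_hasDerivAt_of_tendsto (f := ker d k) (f' := fun z => - ker d (k+1) z) (m := 0) (n := 0)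
    (ker_deriv hd hk) (ker_integrable hd (k+1)).neg
    ((ker_tendsto hd k).mono_left atBot_le_cocompact) ((ker_tendsto hd k).mono_left atTop_le_cocompact)
  rw [integral_neg] at h
  linarith

end HK

namespace HK
open Real Filter Topology

def Q (ψ w : ℝ → ℝ) (σ x : ℝ) : ℝ := ∫ z, w (x + σ * z) * ψ z

lemma Q_eq (ψ w : ℝ → ℝ) {σ : ℝ} (hσ : 0 < σ) (x : ℝ) :
    Q ψ w σ x = σ⁻¹ * ∫ y, w y * ψ ((y - x) / σ) := by
  have h1 := Measure.integral_comp_mul_left (fun y => w (x + y) * ψ (y / σ)) σ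
  have h2 := integral_add_left_eq_self (μ := volume) (fun y => w y * ψ ((y - x) / σ)) x
  simp only [add_sub_cancel_left] at h2
  rw [h2, abs_of_pos (by positivity), smul_eq_mul] at h1
  rw [← h1, Q]
  refine integral_congr_ae (ae_of_all _ fun z => ?_)
  simp only
  rw [mul_div_cancel_left₀ _ hσ.ne']

lemma Q_integrable {ψ w : ℝ → ℝ} (hψ : Integrable ψ) (hw : Continuous w) {A : ℝ}
    (hA : ∀ x, |w x| ≤ A) (σ x : ℝ) : Integrable (fun z => w (x + σ * z) * ψ z) :=
  hψ.bdd_mul (c := A) (by fun_prop) (ae_of_all _ fun z => hA _)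

lemma Q_bound {ψ w : ℝ → ℝ} (hψ : Integrable ψ) {A : ℝ}
    (hA : ∀ x, |w x| ≤ A) (σ x : ℝ) : |Q ψ w σ x| ≤ A * ∫ z, |ψ z| := by
  rw [Q, ← integral_const_mul, ← Real.norm_eq_abs]
  refine norm_integral_le_of_norm_le (hψ.abs.const_mul A) (ae_of_all _ fun z => ?_)
  rw [norm_mul]
  exact mul_le_mul_of_nonneg_right (hA _) (abs_nonneg _)

lemma Q_holder {d α : ℝ} (hd : 0 < d) (hα : 0 < α) {k : ℕ} (hk : k ≤ 1) {w : ℝ → ℝ} (hw : Continuous w) {B : ℝ}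
    (hB : ∀ x, |w x| ≤ B) {A : ℝ} (hA : ∀ x y, |w x - w y| ≤ A * |x - y| ^ α) {σ : ℝ} (hσ : 0 < σ) (x : ℝ) :
    |Q (ker d (k+1)) w σ x| ≤ A * σ ^ α * ∫ z, |z| ^ α * |ker d (k+1) z| := by
  have h1 : Q (ker d (k+1)) w σ x = ∫ z, (w (x + σ * z) - w x) * ker d (k+1) z := by
    simp only [sub_mul]
    rw [integral_sub (Q_integrable (ker_integrable hd _) hw hB σ x) ((ker_integrable hd _).const_mul _),
      integral_const_mul, ker_succ_integral hd hk, mul_zero, sub_zero, Q]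
  rw [h1, ← integral_const_mul, ← Real.norm_eq_abs]
  refine norm_integral_le_of_norm_le ((ker_rpow_integrable hd hα _).const_mul _) (ae_of_all _ fun z => ?_)
  rw [norm_mul, Real.norm_eq_abs, Real.norm_eq_abs, ← mul_assoc]
  refine mul_le_mul_of_nonneg_right ?_ (abs_nonneg _)
  have := hA (x + σ * z) x
  rw [add_sub_cancel_left, abs_mul, abs_of_pos hσ, mul_rpow hσ.le (abs_nonneg z)] at this
  linarith

lemma Q_deriv {d : ℝ} (hd : 0 < d) {k : ℕ} (hk : k ≤ 1) {w : ℝ → ℝ} (hw : Continuous w) {A : ℝ}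
    (hA : ∀ x, |w x| ≤ A) {σ : ℝ} (hσ : 0 < σ) (x : ℝ) :
    HasDerivAt (Q (ker d k) w σ) (σ⁻¹ * Q (ker d (k+1)) w σ x) x := by
  have hA0 : 0 ≤ A := (abs_nonneg _).trans (hA 0)
  have e1 : Q (ker d k) w σ = fun x => σ⁻¹ * ∫ y, w y * ker d k ((y - x) / σ) := by
    ext x; exact Q_eq _ _ hσ x
  have e2 : σ⁻¹ * Q (ker d (k+1)) w σ x = σ⁻¹ * ∫ y, w y * (σ⁻¹ * ker d (k+1) ((y - x) / σ)) := by
    rw [Q_eq _ _ hσ, ← integral_const_mul]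
    congr 1
    refine integral_congr_ae (ae_of_all _ fun z => ?_)
    simp only; ring
  rw [e1, e2]
  obtain ⟨C, hC, hCb⟩ := ker_bound hd (k+1)
  have hint : ∀ x, Integrable (fun y => w y * ker d k ((y - x) / σ)) := by
    intro x
    refine Integrable.bdd_mul (c := A) ?_ (by fun_prop) (ae_of_all _ fun z => hA _)
    exact ((ker_integrable hd k).comp_div hσ.ne').comp_sub_right x
  have hkc := ker_cont d k
  have hkc' := ker_cont d (k+1)
  refine HasDerivAt.const_mul _ ?_
  refine (hasDerivAt_integral_of_dominated_loc_of_deriv_le (F := fun x y => w y * ker d k ((y - x) / σ))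
    (F' := fun x y => w y * (σ⁻¹ * ker d (k+1) ((y - x) / σ))) (s := Metric.ball x σ)
    (bound := fun y => A * (σ⁻¹ * (C * (exp (1 / (8*d)) * exp (-(1 / (16 * d * σ^2)) * (y - x) ^ 2)))))
    (Metric.ball_mem_nhds x hσ) ?_ (hint x) ?_ ?_ ?_ ?_).2
  · exact Eventually.of_forall fun x => (hint x).aestronglyMeasurable
  · exact Continuous.aestronglyMeasurable (by fun_prop)
  · refine ae_of_all _ fun y x' hx' => ?_
    rw [norm_mul, norm_mul, Real.norm_eq_abs, Real.norm_eq_abs, Real.norm_eq_abs, abs_of_pos (a := σ⁻¹) (by positivity)]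
    gcongr
    · exact hA y
    · refine (hCb _).trans ?_
      gcongr
      rw [← exp_add]
      gcongr
      rw [Metric.mem_ball, Real.dist_eq] at hx'
      have h1 : (x' - x)^2 ≤ σ^2 := by
        rw [← sq_abs (x' - x)]; gcongr
      have h2 : (y - x)^2 ≤ 2 * (y - x')^2 + 2 * σ^2 := by
        nlinarith [sq_nonneg ((y - x') - (x' - x))]
      have h3 : -(1 / (8 * d)) * ((y - x') / σ) ^ 2 = -(2 * (y - x')^2) / (16 * d * σ^2) := by
        field_simp; ring
      have h4 : 1 / (8*d) + -(1 / (16 * d * σ ^ 2)) * (y - x) ^ 2 = (2 * σ^2 - (y-x)^2) / (16 * d * σ^2) := by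
        field_simp; ring
      rw [h3, h4]
      gcongr
      linarith
  · refine Integrable.const_mul (Integrable.const_mul (Integrable.const_mul (Integrable.const_mul ?_ _) _) _) _
    exact (integrable_exp_neg_mul_sq (b := 1 / (16 * d * σ^2)) (by positivity)).comp_sub_right x
  · refine ae_of_all _ fun y x' _ => ?_
    refine HasDerivAt.const_mul _ ?_
    have h1 : HasDerivAt (fun x => (y - x) / σ) (-1 / σ) x' := by
      simpa using ((hasDerivAt_id x').const_sub y).div_const σ
    have h2 := (ker_deriv hd hk ((y - x') / σ)).comp x' h1
    exact h2.congr_deriv (by field_simp)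

lemma Q_time {d : ℝ} (hd : 0 < d) {w : ℝ → ℝ} (hw : Continuous w) {A : ℝ}
    (hA : ∀ x, |w x| ≤ A) (x : ℝ) {τ : ℝ} (hτ : 0 < τ) :
    HasDerivAt (fun τ => Q (ker d 0) w (√τ) x) (d * (τ⁻¹ * Q (ker d 2) w (√τ) x)) τ := by
  have hA0 : 0 ≤ A := (abs_nonneg _).trans (hA 0)
  have e1 : (fun τ => Q (ker d 0) w (√τ) x) =ᶠ[𝓝 τ] fun τ => ∫ y, w y * ((√τ)⁻¹ * ker d 0 ((y - x) / √τ)) := by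
    filter_upwards [lt_mem_nhds hτ] with τ hτ
    rw [Q_eq _ _ (by positivity), ← integral_const_mul]
    refine integral_congr_ae (ae_of_all _ fun z => ?_)
    simp only; ring
  have e2 : d * (τ⁻¹ * Q (ker d 2) w (√τ) x) = ∫ y, w y * (d * (τ⁻¹ * ((√τ)⁻¹ * ker d 2 ((y - x) / √τ)))) := by
    rw [Q_eq _ _ (by positivity), ← integral_const_mul, ← integral_const_mul, ← integral_const_mul]
    refine integral_congr_ae (ae_of_all _ fun z => ?_)
    simp only; ring
  refine HasDerivAt.congr_of_eventuallyEq ?_ e1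
  rw [e2]
  obtain ⟨C, hC, hCb⟩ := ker_bound hd 2
  have hint : ∀ τ : ℝ, 0 < τ → Integrable (fun y => w y * ((√τ)⁻¹ * ker d 0 ((y - x) / √τ))) := by
    intro τ hτ
    refine Integrable.bdd_mul (c := A) ?_ (by fun_prop) (ae_of_all _ fun z => hA _)
    exact (((ker_integrable hd 0).comp_div (by positivity)).comp_sub_right x).const_mul _
  have hkc := ker_cont d 0
  have hkc' := ker_cont d 2
  refine (hasDerivAt_integral_of_dominated_loc_of_deriv_le (F := fun τ y => w y * ((√τ)⁻¹ * ker d 0 ((y - x) / √τ)))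
    (F' := fun τ y => w y * (d * (τ⁻¹ * ((√τ)⁻¹ * ker d 2 ((y - x) / √τ))))) (s := Ioo (τ/2) (2*τ))
    (bound := fun y => A * (d * ((τ/2)⁻¹ * ((√(τ/2))⁻¹ * (C * exp (-(1 / (16 * d * τ)) * (y - x) ^ 2))))))
    (Ioo_mem_nhds (by linarith) (by linarith)) ?_ (hint τ hτ) ?_ ?_ ?_ ?_).2
  · filter_upwards [lt_mem_nhds hτ] with τ hτ
    exact (hint τ hτ).aestronglyMeasurable
  · exact Continuous.aestronglyMeasurable (by fun_prop)
  · refine ae_of_all _ fun y τ' hτ' => ?_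
    have hp : 0 < τ' := by linarith [hτ'.1]
    rw [norm_mul, norm_mul, norm_mul, norm_mul]
    simp only [Real.norm_eq_abs]
    rw [abs_of_pos hd, abs_of_pos (a := τ'⁻¹) (by positivity), abs_of_pos (a := (√τ')⁻¹) (by positivity)]
    gcongr
    · exact hA y
    · exact hτ'.1.le
    · exact hτ'.1.le
    · refine (hCb _).trans ?_
      refine mul_le_mul_of_nonneg_left (exp_le_exp.2 ?_) hC.le
      rw [div_pow, sq_sqrt hp.le, ← mul_div_assoc, div_le_iff₀ hp]
      have : (1 / (16 * d * τ)) * (y-x)^2 * τ' ≤ (1 / (16 * d * τ)) * (y-x)^2 * (2 * τ) := by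
        gcongr; exact hτ'.2.le
      have h2 : (1 / (16 * d * τ)) * (y-x)^2 * (2 * τ) = (1 / (8 * d)) * (y-x)^2 := by
        field_simp; ring
      linarith
  · refine Integrable.const_mul (Integrable.const_mul (Integrable.const_mul (Integrable.const_mul (Integrable.const_mul ?_ _) _) _) _) _
    exact (integrable_exp_neg_mul_sq (b := 1 / (16 * d * τ)) (by positivity)).comp_sub_right x
  · refine ae_of_all _ fun y τ' hτ' => ?_
    have hp : 0 < τ' := by linarith [hτ'.1]
    refine HasDerivAt.const_mul _ ?_
    have hs : HasDerivAt (fun τ => (√τ)⁻¹) (-(1 / (2 * √τ')) / (√τ')^2) τ' :=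
      (Real.hasDerivAt_sqrt hp.ne').inv (by positivity)
    have h1 : HasDerivAt (fun τ => (y - x) / √τ) ((y - x) * (-(1 / (2 * √τ')) / (√τ')^2)) τ' := by
      simpa [div_eq_mul_inv] using hs.const_mul (y - x)
    have h2 := hs.mul ((ker_deriv hd (k := 0) (by norm_num) ((y - x) / √τ')).comp τ' h1)
    refine h2.congr_deriv ?_
    have hq : 0 < √τ' := by positivity
    have hqq : τ' = (√τ')^2 := (sq_sqrt hp.le).symm
    simp only [Function.comp, ker, zero_add]
    set q := √τ'
    rw [hqq]
    field_simp
    ring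

lemma Q_diff {d α : ℝ} (hd : 0 < d) (hα : 0 < α) (hα1 : α < 1) {k : ℕ} (hk : k ≤ 1) :
    ∃ C, 0 ≤ C ∧ ∀ (w : ℝ → ℝ) (_ : Continuous w) (A : ℝ) (_ : ∀ x, |w x| ≤ A) (σ : ℝ) (_ : 0 < σ) (x y : ℝ),
      |Q (ker d k) w σ x - Q (ker d k) w σ y| ≤ C * A * |x - y| ^ α * σ ^ (-α) := by
  set I0 := ∫ z, |ker d k z|
  set I1 := ∫ z, |ker d (k+1) z|
  have hI0 : 0 ≤ I0 := integral_nonneg fun _ => abs_nonneg _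
  have hI1 : 0 ≤ I1 := integral_nonneg fun _ => abs_nonneg _
  refine ⟨2 * I0 + I1, by positivity, fun w hw A hA σ hσ x y => ?_⟩
  have hA0 : 0 ≤ A := (abs_nonneg _).trans (hA 0)
  have b1 : |Q (ker d k) w σ x - Q (ker d k) w σ y| ≤ 2 * I0 * A := by
    have h1 := Q_bound (ker_integrable hd k) hA σ x
    have h2 := Q_bound (ker_integrable hd k) hA σ y
    calc _ ≤ |Q (ker d k) w σ x| + |Q (ker d k) w σ y| := abs_sub _ _
      _ ≤ _ := by linarith
  have b2 : |Q (ker d k) w σ x - Q (ker d k) w σ y| ≤ I1 * A * (|x - y| / σ) := by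
    have := Convex.norm_image_sub_le_of_norm_hasDerivWithin_le (s := univ) (C := σ⁻¹ * (A * I1))
      (f := Q (ker d k) w σ) (f' := fun x => σ⁻¹ * Q (ker d (k+1)) w σ x) (x := y) (y := x)
      (fun x _ => (Q_deriv hd hk hw hA hσ x).hasDerivWithinAt) (fun x _ => by
        rw [norm_mul, Real.norm_eq_abs, abs_of_pos (by positivity)]
        gcongr
        exact Q_bound (ker_integrable hd (k+1)) hA σ x) convex_univ (mem_univ _) (mem_univ _)
    rw [Real.norm_eq_abs, Real.norm_eq_abs] at this
    calc _ ≤ _ := this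
      _ = _ := by ring
  have e : |x - y| ^ α * σ ^ (-α) = (|x - y| / σ) ^ α := by
    rw [rpow_neg hσ.le, div_rpow (abs_nonneg _) hσ.le]; rfl
  have hq : 0 ≤ |x - y| / σ := by positivity
  rw [mul_assoc ((2 * I0 + I1) * A), e]
  set q := |x - y| / σ
  have hz : 0 ≤ q ^ α := rpow_nonneg hq _
  rcases le_total q 1 with h | h
  · have : q ≤ q ^ α := by
      simpa using rpow_le_rpow_of_exponent_ge' hq h hα.le hα1.le
    calc _ ≤ I1 * A * q := b2
      _ ≤ I1 * A * q ^ α := by gcongr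
      _ ≤ (2 * I0 + I1) * A * q ^ α := by gcongr; linarith
  · have : 1 ≤ q ^ α := one_le_rpow h hα.le
    calc _ ≤ 2 * I0 * A * 1 := by linarith
      _ ≤ 2 * I0 * A * q ^ α := by gcongr
      _ ≤ (2 * I0 + I1) * A * q ^ α := by gcongr; linarith

end HK

namespace HK
open Real Filter Topology

def Cont (h : ℝ → ℝ → ℝ) : Prop := ContinuousOn (fun p : ℝ × ℝ => h p.1 p.2) {p | 0 < p.2}

def Bd (a : ℝ) (h : ℝ → ℝ → ℝ) : Prop :=
  ∀ T > 0, ∃ A, 0 ≤ A ∧ ∀ x s : ℝ, 0 < s → s ≤ T → |h x s| ≤ A * s ^ (-a)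

def Hol (α a : ℝ) (h : ℝ → ℝ → ℝ) : Prop :=
  ∀ T > 0, ∃ A, 0 ≤ A ∧ ∀ x y s : ℝ, 0 < s → s ≤ T → |h x s - h y s| ≤ A * |x - y| ^ α * s ^ (-a)

lemma isOpen_pos2 : IsOpen {p : ℝ × ℝ | 0 < p.2} := isOpen_lt continuous_const continuous_snd

lemma Cont.slice {h : ℝ → ℝ → ℝ} (H : Cont h) {s : ℝ} (hs : 0 < s) : Continuous (fun y => h y s) := by
  refine H.comp_continuous (f := fun y => ((y, s) : ℝ × ℝ)) (by fun_prop) (fun x => hs)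

lemma rpow_weak {a b s T : ℝ} (hab : a ≤ b) (hs : 0 < s) (hT : s ≤ T) :
    s ^ (-a) ≤ T ^ (b - a) * s ^ (-b) := by
  have : s ^ (-a) = s ^ (b - a) * s ^ (-b) := by rw [← rpow_add hs]; congr 1; ring
  rw [this]
  gcongr

lemma Bd.weak {a b : ℝ} {h : ℝ → ℝ → ℝ} (H : Bd a h) (hab : a ≤ b) : Bd b h := by
  intro T hT
  obtain ⟨A, hA, h1⟩ := H T hT
  refine ⟨A * T ^ (b - a), by positivity, fun x s hs hsT => (h1 x s hs hsT).trans ?_⟩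
  rw [mul_assoc]
  gcongr
  exact rpow_weak hab hs hsT

lemma Hol.weak {α a b : ℝ} {h : ℝ → ℝ → ℝ} (H : Hol α a h) (hab : a ≤ b) : Hol α b h := by
  intro T hT
  obtain ⟨A, hA, h1⟩ := H T hT
  refine ⟨A * T ^ (b - a), by positivity, fun x y s hs hsT => (h1 x y s hs hsT).trans ?_⟩
  calc A * |x - y| ^ α * s ^ (-a) ≤ A * |x - y| ^ α * (T ^ (b - a) * s ^ (-b)) := by
        gcongr; exact rpow_weak hab hs hsT
    _ = _ := by ring

lemma Q_cont {ψ : ℝ → ℝ} (hψ : Integrable ψ) (hψc : Continuous ψ) {h : ℝ → ℝ → ℝ} (H : Cont h)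
    {a : ℝ} (ha : 0 ≤ a) (Hb : Bd a h) :
    ContinuousOn (fun p : ℝ × ℝ × ℝ => Q ψ (fun y => h y p.2.1) p.2.2 p.1) {p | 0 < p.2.1} := by
  intro p0 hp0
  refine ContinuousAt.continuousWithinAt ?_
  obtain ⟨x0, s0, σ0⟩ := p0
  simp only [mem_ofPred_eq] at hp0
  obtain ⟨A, hA, hb⟩ := Hb (2 * s0) (by linarith)
  have hnear : ∀ᶠ p : ℝ × ℝ × ℝ in 𝓝 (x0, s0, σ0), p.2.1 ∈ Ioo (s0 / 2) (2 * s0) := by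
    have : ContinuousAt (fun p : ℝ × ℝ × ℝ => p.2.1) (x0, s0, σ0) := by fun_prop
    exact this.eventually_mem (Ioo_mem_nhds (by simp; linarith) (by simp; linarith))
  unfold Q
  refine continuousAt_of_dominated (bound := fun z => A * (s0 / 2) ^ (-a) * |ψ z|) ?_ ?_ ?_ ?_
  · filter_upwards [hnear] with p hp
    have h1 := H.slice (s := p.2.1) (by linarith [hp.1])
    refine Continuous.aestronglyMeasurable ?_
    exact (h1.comp (by fun_prop)).mul hψc
  · filter_upwards [hnear] with p hp
    refine ae_of_all _ fun z => ?_
    rw [norm_mul]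
    refine mul_le_mul_of_nonneg_right ?_ (abs_nonneg _)
    refine (hb _ _ (by linarith [hp.1]) hp.2.le).trans ?_
    refine mul_le_mul_of_nonneg_left ?_ hA
    exact rpow_le_rpow_of_nonpos (by linarith) hp.1.le (by linarith)
  · exact hψ.abs.const_mul _
  · refine ae_of_all _ fun z => ?_
    refine ContinuousAt.mul ?_ continuousAt_const
    have h2 : ContinuousAt (fun p : ℝ × ℝ => h p.1 p.2) (x0 + σ0 * z, s0) :=
      H.continuousAt (isOpen_pos2.mem_nhds hp0)
    exact ContinuousAt.comp (x := (x0, s0, σ0)) (f := fun p : ℝ × ℝ × ℝ => (p.1 + p.2.2 * z, p.2.1)) (g := fun p : ℝ × ℝ => h p.1 p.2) h2 (by fun_prop)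

def QB (d : ℝ) (k : ℕ) (γ a : ℝ) (h : ℝ → ℝ → ℝ) : Prop :=
  ∀ T > 0, ∃ A, 0 ≤ A ∧ ∀ x s σ : ℝ, 0 < s → s ≤ T → 0 < σ →
    |Q (ker d k) (fun y => h y s) σ x| ≤ A * σ ^ γ * s ^ (-a)

structure Adm (d : ℝ) (k : ℕ) (γ a : ℝ) (h : ℝ → ℝ → ℝ) : Prop where
  hd : 0 < d
  cont : Cont h
  bd : ∃ b, 0 ≤ b ∧ Bd b h
  qb : QB d k γ a h
  p0 : 0 ≤ (k - γ) / 2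
  p1 : (k - γ) / 2 < 1
  a0 : 0 ≤ a
  a1 : a < 1

lemma Adm.of_bd {d : ℝ} (hd : 0 < d) {k : ℕ} (hk : k ≤ 1) {a : ℝ} (a0 : 0 ≤ a) (a1 : a < 1) {h : ℝ → ℝ → ℝ}
    (H : Cont h) (Hb : Bd a h) : Adm d k 0 a h := by
  refine ⟨hd, H, ⟨a, a0, Hb⟩, ?_, by linarith [Nat.cast_nonneg (α := ℝ) k], ?_, a0, a1⟩
  · intro T hT
    obtain ⟨A, hA, hb⟩ := Hb T hT
    refine ⟨A * ∫ z, |ker d k z|, mul_nonneg hA (integral_nonneg fun _ => abs_nonneg _), fun x s σ hs hsT hσ => ?_⟩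
    have := Q_bound (ker_integrable hd k) (w := fun y => h y s) (fun x => hb x s hs hsT) σ x
    rw [rpow_zero]
    calc _ ≤ _ := this
      _ = _ := by ring
  · have : (k : ℝ) ≤ 1 := by exact_mod_cast hk
    linarith

lemma Adm.of_hol {d : ℝ} (hd : 0 < d) {α a b : ℝ} (hα : 0 < α) (hα1 : α < 1) (a0 : 0 ≤ a) (b0 : 0 ≤ b) (b1 : b < 1) {h : ℝ → ℝ → ℝ}
    (H : Cont h) (Hb : Bd a h) (Hh : Hol α b h) : Adm d 2 α b h := by
  refine ⟨hd, H, ⟨a, a0, Hb⟩, ?_, by push_cast; linarith, by push_cast; linarith, b0, b1⟩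
  intro T hT
  obtain ⟨B, hB, hb⟩ := Hb T hT
  obtain ⟨A, hA, hh⟩ := Hh T hT
  refine ⟨A * ∫ z, |z| ^ α * |ker d 2 z|, mul_nonneg hA (integral_nonneg fun _ => by positivity), fun x s σ hs hsT hσ => ?_⟩
  have := Q_holder hd hα (k := 1) le_rfl (H.slice hs) (fun x => hb x s hs hsT) (A := A * s ^ (-b))
    (fun x y => (hh x y s hs hsT).trans (le_of_eq (by ring))) hσ x
  calc _ ≤ _ := this
    _ = _ := by norm_num; ring

def DI (d : ℝ) (k : ℕ) (h : ℝ → ℝ → ℝ) (x t r : ℝ) : ℝ :=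
  ((√(t * r)) ^ k)⁻¹ * Q (ker d k) (fun y => h y (t * (1 - r))) (√(t * r)) x

def Duh (d : ℝ) (k : ℕ) (h : ℝ → ℝ → ℝ) (x t : ℝ) : ℝ :=
  t * ∫ r in Ioo (0:ℝ) 1, DI d k h x t r

lemma beta_integrable {p a : ℝ} (p0 : 0 ≤ p) (p1 : p < 1) (a0 : 0 ≤ a) (a1 : a < 1) :
    IntegrableOn (fun r : ℝ => r ^ (-p) * (1 - r) ^ (-a)) (Ioo 0 1) := by
  have i1 : IntegrableOn (fun r : ℝ => r ^ (-p)) (Ioo 0 1) := by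
    have := intervalIntegral.intervalIntegrable_rpow' (a := 0) (b := 1) (r := -p) (by linarith)
    rw [intervalIntegrable_iff_integrableOn_Ioo_of_le (by norm_num)] at this
    exact this
  have i2 : IntegrableOn (fun r : ℝ => (1 - r) ^ (-a)) (Ioo 0 1) := by
    have := (intervalIntegral.intervalIntegrable_rpow' (a := 0) (b := 1) (r := -a) (by linarith)).comp_sub_left 1
    simp only [sub_zero, sub_self] at this
    have := this.symm
    rw [intervalIntegrable_iff_integrableOn_Ioo_of_le (by norm_num)] at this
    exact this
  refine ((i1.const_mul ((1/2:ℝ) ^ (-a))).add (i2.const_mul ((1/2:ℝ) ^ (-p)))).mono' ?_ ?_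
  · refine (ContinuousOn.mul ?_ ?_).aestronglyMeasurable measurableSet_Ioo
    · exact ContinuousOn.rpow_const (by fun_prop) (fun x hx => Or.inl hx.1.ne')
    · exact ContinuousOn.rpow_const (by fun_prop) (fun x hx => Or.inl (by linarith [hx.2]))
  · filter_upwards [self_mem_ae_restrict measurableSet_Ioo] with r hr
    have h1 : 0 < 1 - r := by linarith [hr.2]
    have h0 : 0 < r := hr.1
    rw [Real.norm_eq_abs, abs_of_pos (by positivity), Pi.add_apply]
    rcases le_total r (1/2) with h | h
    · have : (1 - r) ^ (-a) ≤ (1/2:ℝ) ^ (-a) := rpow_le_rpow_of_nonpos (by norm_num) (by linarith) (by linarith)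
      calc _ ≤ r ^ (-p) * (1/2:ℝ) ^ (-a) := by gcongr
        _ = (1/2:ℝ) ^ (-a) * r ^ (-p) := by ring
        _ ≤ _ := by simp only [le_add_iff_nonneg_right]; positivity
    · have : r ^ (-p) ≤ (1/2:ℝ) ^ (-p) := rpow_le_rpow_of_nonpos (by norm_num) (by linarith) (by linarith)
      calc _ ≤ (1/2:ℝ) ^ (-p) * (1 - r) ^ (-a) := by gcongr
        _ ≤ _ := by simp only [le_add_iff_nonneg_left]; positivity

def Be (p a : ℝ) : ℝ := ∫ r in Ioo (0:ℝ) 1, r ^ (-p) * (1 - r) ^ (-a)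

lemma Be_nonneg (p a : ℝ) : 0 ≤ Be p a :=
  setIntegral_nonneg measurableSet_Ioo fun r hr => by
    have h1 : 0 < 1 - r := by linarith [hr.2]
    have h0 : 0 < r := hr.1
    positivity

lemma sqrt_pow_inv {y : ℝ} (hy : 0 < y) (k : ℕ) (γ : ℝ) : ((√y) ^ k)⁻¹ * (√y) ^ γ = y ^ (-((k - γ) / 2)) := by
  rw [sqrt_eq_rpow, ← rpow_natCast, ← rpow_neg (by positivity), ← rpow_mul hy.le, ← rpow_mul hy.le, ← rpow_add hy]
  congr 1; ring

lemma DI_bound {d : ℝ} {k : ℕ} {γ a A : ℝ} {h : ℝ → ℝ → ℝ} {x t r : ℝ} (ht : 0 < t) (hr : r ∈ Ioo (0:ℝ) 1)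
    (hA : ∀ σ, 0 < σ → |Q (ker d k) (fun y => h y (t * (1 - r))) σ x| ≤ A * σ ^ γ * (t * (1 - r)) ^ (-a)) :
    |DI d k h x t r| ≤ A * t ^ (-((k - γ) / 2) - a) * (r ^ (-((k - γ) / 2)) * (1 - r) ^ (-a)) := by
  have h1 : 0 < 1 - r := by linarith [hr.2]
  have h0 : 0 < r := hr.1
  have hs : 0 < √(t * r) := by positivity
  rw [DI, abs_mul, abs_of_pos (by positivity)]
  calc _ ≤ ((√(t * r)) ^ k)⁻¹ * (A * (√(t * r)) ^ γ * (t * (1 - r)) ^ (-a)) := by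
        gcongr; exact hA _ hs
    _ = (((√(t * r)) ^ k)⁻¹ * (√(t * r)) ^ γ) * (A * (t * (1 - r)) ^ (-a)) := by ring
    _ = _ := by
      rw [sqrt_pow_inv (by positivity), mul_rpow ht.le h0.le, mul_rpow ht.le h1.le, sub_eq_add_neg _ a, rpow_add ht]
      ring

lemma Duh_bound_aux {d : ℝ} {k : ℕ} {γ a A : ℝ} {h : ℝ → ℝ → ℝ} {x t : ℝ} (ht : 0 < t)
    (p0 : 0 ≤ (k - γ) / 2) (p1 : (k - γ) / 2 < 1) (a0 : 0 ≤ a) (a1 : a < 1)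
    (hA : ∀ s, 0 < s → s ≤ t → ∀ σ, 0 < σ → |Q (ker d k) (fun y => h y s) σ x| ≤ A * σ ^ γ * s ^ (-a)) :
    |Duh d k h x t| ≤ A * Be ((k - γ) / 2) a * t ^ (1 - (k - γ) / 2 - a) := by
  rw [Duh, abs_mul, abs_of_pos ht]
  have : |∫ r in Ioo (0:ℝ) 1, DI d k h x t r| ≤
      ∫ r in Ioo (0:ℝ) 1, A * t ^ (-((k - γ) / 2) - a) * (r ^ (-((k - γ) / 2)) * (1 - r) ^ (-a)) := by
    rw [← Real.norm_eq_abs]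
    refine norm_integral_le_of_norm_le ((beta_integrable p0 p1 a0 a1).const_mul _) ?_
    filter_upwards [self_mem_ae_restrict measurableSet_Ioo] with r hr
    have h1 : 0 < 1 - r := by linarith [hr.2]
    refine DI_bound ht hr (hA _ (by positivity) ?_)
    nlinarith [hr.1]
  rw [integral_const_mul] at this
  calc _ ≤ t * (A * t ^ (-((k - γ) / 2) - a) * Be ((k - γ) / 2) a) := by gcongr; exact this
    _ = A * Be ((k - γ) / 2) a * (t ^ (1:ℝ) * t ^ (-((k - γ) / 2) - a)) := by rw [rpow_one]; ring
    _ = _ := by rw [← rpow_add ht]; congr 2; ring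

section
variable {d : ℝ} {k : ℕ} {γ a : ℝ} {h : ℝ → ℝ → ℝ}

lemma Duh_bound (H : Adm d k γ a h) : Bd (-(1 - (k - γ) / 2 - a)) (Duh d k h) := by
  intro T hT
  obtain ⟨A, hA, hq⟩ := H.qb T hT
  refine ⟨A * Be ((k - γ) / 2) a, mul_nonneg hA (Be_nonneg _ _), fun x t ht htT => ?_⟩
  rw [neg_neg]
  exact Duh_bound_aux ht H.p0 H.p1 H.a0 H.a1 fun s hs hst σ hσ => hq x s σ hs (hst.trans htT) hσ

lemma DI_contOn (H : Adm d k γ a h) :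
    ContinuousOn (fun p : ℝ × ℝ × ℝ => DI d k h p.1 p.2.1 p.2.2) {p | 0 < p.2.1 ∧ p.2.2 ∈ Ioo (0:ℝ) 1} := by
  obtain ⟨b, b0, hb⟩ := H.bd
  unfold DI
  refine ContinuousOn.mul ?_ ?_
  · refine ContinuousOn.inv₀ (by fun_prop) ?_
    rintro ⟨x, t, r⟩ ⟨ht, hr⟩
    have : 0 < t * r := mul_pos ht hr.1
    positivity
  · refine (Q_cont (ker_integrable H.hd k) (ker_cont d k) H.cont b0 hb).comp
      (f := fun p : ℝ × ℝ × ℝ => (p.1, p.2.1 * (1 - p.2.2), √(p.2.1 * p.2.2))) (by fun_prop) ?_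
    rintro ⟨x, t, r⟩ ⟨ht, hr⟩
    exact mul_pos ht (sub_pos.2 hr.2)

lemma DI_meas (H : Adm d k γ a h) (x : ℝ) {t : ℝ} (ht : 0 < t) :
    AEStronglyMeasurable (DI d k h x t) (volume.restrict (Ioo (0:ℝ) 1)) := by
  refine ContinuousOn.aestronglyMeasurable ?_ measurableSet_Ioo
  exact (DI_contOn H).comp (f := fun r : ℝ => ((x, t, r) : ℝ × ℝ × ℝ)) (by fun_prop) (fun r hr => ⟨ht, hr⟩)

lemma DI_bound' (H : Adm d k γ a h) {T : ℝ} (hT : 0 < T) : ∃ A, 0 ≤ A ∧ ∀ x t, 0 < t → t ≤ T → ∀ r ∈ Ioo (0:ℝ) 1,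
    |DI d k h x t r| ≤ A * t ^ (-((k - γ) / 2) - a) * (r ^ (-((k - γ) / 2)) * (1 - r) ^ (-a)) := by
  obtain ⟨A, hA, hq⟩ := H.qb T hT
  refine ⟨A, hA, fun x t ht htT r hr => DI_bound ht hr fun σ hσ => hq _ _ _ ?_ ?_ hσ⟩
  · exact mul_pos ht (sub_pos.2 hr.2)
  · nlinarith [hr.1, hr.2]

lemma DI_integrable (H : Adm d k γ a h) (x : ℝ) {t : ℝ} (ht : 0 < t) :
    IntegrableOn (DI d k h x t) (Ioo (0:ℝ) 1) := by
  obtain ⟨A, hA, hq⟩ := DI_bound' H ht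
  refine ((beta_integrable H.p0 H.p1 H.a0 H.a1).const_mul (A * t ^ (-((k - γ) / 2) - a))).mono' (DI_meas H x ht) ?_
  filter_upwards [self_mem_ae_restrict measurableSet_Ioo] with r hr
  exact hq x t ht le_rfl r hr

lemma Duh_cont (H : Adm d k γ a h) : Cont (Duh d k h) := by
  rintro ⟨x0, t0⟩ ht0
  simp only [mem_ofPred_eq] at ht0
  refine ContinuousAt.continuousWithinAt ?_
  obtain ⟨A, hA, hq⟩ := DI_bound' H (T := 2 * t0) (by linarith)
  have hnear : ∀ᶠ p : ℝ × ℝ in 𝓝 (x0, t0), p.2 ∈ Ioo (t0 / 2) (2 * t0) := by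
    have : ContinuousAt (fun p : ℝ × ℝ => p.2) (x0, t0) := by fun_prop
    exact this.eventually_mem (Ioo_mem_nhds (by simp; linarith) (by simp; linarith))
  unfold Duh
  refine ContinuousAt.mul continuousAt_snd ?_
  refine continuousAt_of_dominated (F := fun (p : ℝ × ℝ) r => DI d k h p.1 p.2 r)
    (bound := fun r => (A * (t0/2) ^ (-((k - γ) / 2) - a)) * (r ^ (-((k - γ) / 2)) * (1 - r) ^ (-a)))
    ?_ ?_ ((beta_integrable H.p0 H.p1 H.a0 H.a1).const_mul _) ?_
  · filter_upwards [hnear] with p hp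
    exact DI_meas H _ (by linarith [hp.1])
  · filter_upwards [hnear] with p hp
    filter_upwards [self_mem_ae_restrict measurableSet_Ioo] with r hr
    have h1 : 0 < 1 - r := by linarith [hr.2]
    have h0 : 0 < r := hr.1
    refine (hq p.1 p.2 (by linarith [hp.1]) hp.2.le r hr).trans ?_
    refine mul_le_mul_of_nonneg_right (mul_le_mul_of_nonneg_left ?_ hA) (by positivity)
    exact rpow_le_rpow_of_nonpos (by linarith) hp.1.le (by linarith [H.p0, H.a0])
  · filter_upwards [self_mem_ae_restrict measurableSet_Ioo] with r hr
    have ho : IsOpen {p : ℝ × ℝ × ℝ | 0 < p.2.1 ∧ p.2.2 ∈ Ioo (0:ℝ) 1} :=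
      (isOpen_lt continuous_const (continuous_fst.comp continuous_snd)).inter
        (isOpen_Ioo.preimage (continuous_snd.comp continuous_snd))
    have := (DI_contOn H).continuousAt (x := (x0, t0, r)) (ho.mem_nhds ⟨ht0, hr⟩)
    exact ContinuousAt.comp (x := (x0, t0)) (f := fun p : ℝ × ℝ => (p.1, p.2, r))
      (g := fun p : ℝ × ℝ × ℝ => DI d k h p.1 p.2.1 p.2.2) this (by fun_prop)

lemma DI_deriv (H : Adm d k γ a h) (hk : k ≤ 1) (x : ℝ) {t r : ℝ} (ht : 0 < t) (hr : r ∈ Ioo (0:ℝ) 1) :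
    HasDerivAt (fun x => DI d k h x t r) (DI d (k+1) h x t r) x := by
  obtain ⟨b, b0, hb⟩ := H.bd
  have hs : 0 < t * (1 - r) := mul_pos ht (sub_pos.2 hr.2)
  have hσ : 0 < √(t * r) := by have := mul_pos ht hr.1; positivity
  obtain ⟨B, hB, hb'⟩ := hb _ hs
  have := (Q_deriv H.hd hk (H.cont.slice hs) (fun x => hb' x _ hs le_rfl) hσ x).const_mul ((√(t * r)) ^ k)⁻¹
  refine this.congr_deriv ?_
  rw [DI, pow_succ, mul_inv, mul_assoc]

lemma Duh_deriv (H : Adm d k γ a h) {γ' a' : ℝ} (H' : Adm d (k+1) γ' a' h) (hk : k ≤ 1) (x : ℝ) {t : ℝ} (ht : 0 < t) :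
    HasDerivAt (fun x => Duh d k h x t) (Duh d (k+1) h x t) x := by
  unfold Duh
  refine HasDerivAt.const_mul _ ?_
  obtain ⟨A, hA, hq⟩ := DI_bound' H' ht
  refine (hasDerivAt_integral_of_dominated_loc_of_deriv_le (s := univ) univ_mem (F := fun x r => DI d k h x t r)
    (F' := fun x r => DI d (k+1) h x t r) ?_ (DI_integrable H x ht) (DI_meas H' x ht) ?_
    ((beta_integrable H'.p0 H'.p1 H'.a0 H'.a1).const_mul (A * t ^ (-(((k+1 : ℕ) - γ') / 2) - a'))) ?_).2
  · exact Eventually.of_forall fun x => DI_meas H x ht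
  · filter_upwards [self_mem_ae_restrict measurableSet_Ioo] with r hr x _
    exact hq x t ht le_rfl r hr
  · filter_upwards [self_mem_ae_restrict measurableSet_Ioo] with r hr x _
    exact DI_deriv H hk x ht hr

lemma Duh_sub {h' : ℝ → ℝ → ℝ} {γ' a' : ℝ} (H : Adm d k γ a h) (H' : Adm d k γ' a' h') (x : ℝ) {t : ℝ} (ht : 0 < t) :
    Duh d k h x t - Duh d k h' x t = Duh d k (fun x t => h x t - h' x t) x t := by
  obtain ⟨b, b0, hb⟩ := H.bd
  obtain ⟨b', b0', hb'⟩ := H'.bd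
  unfold Duh
  rw [← mul_sub, ← integral_sub (DI_integrable H x ht) (DI_integrable H' x ht)]
  congr 1
  refine setIntegral_congr_fun measurableSet_Ioo fun r hr => ?_
  have hs : 0 < t * (1 - r) := mul_pos ht (sub_pos.2 hr.2)
  obtain ⟨B, hB, hb⟩ := hb _ hs
  obtain ⟨B', hB', hb'⟩ := hb' _ hs
  simp only [DI]
  rw [← mul_sub]
  congr 1
  rw [Q, Q, Q, ← integral_sub]
  · simp only [sub_mul]
  · exact Q_integrable (ker_integrable H.hd k) (H.cont.slice hs) (fun x => hb x _ hs le_rfl) _ _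
  · exact Q_integrable (ker_integrable H.hd k) (H'.cont.slice hs) (fun x => hb' x _ hs le_rfl) _ _

end

lemma Duh_hol {d α : ℝ} (hd : 0 < d) (hα : 0 < α) (hα1 : α < 1) {k : ℕ} (hk : k ≤ 1) {a : ℝ} {h : ℝ → ℝ → ℝ}
    (a0 : 0 ≤ a) (a1 : a < 1) (Hc : Cont h) (Hb : Bd a h) : Hol α a (Duh d k h) := by
  have H := Adm.of_bd hd hk a0 a1 Hc Hb
  have hk' : (k:ℝ) ≤ 1 := by exact_mod_cast hk
  have hk0 : (0:ℝ) ≤ k := by positivity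
  obtain ⟨C, hC, hQ⟩ := Q_diff hd hα hα1 hk
  intro T hT
  obtain ⟨A, hA, hb⟩ := Hb T hT
  set p := ((k:ℝ) - -α) / 2 with hp
  have p0 : 0 ≤ p := by rw [hp]; linarith
  have p1 : p < 1 := by rw [hp]; linarith
  refine ⟨C * A * Be p a * T ^ (1 - p), mul_nonneg (mul_nonneg (by positivity) (Be_nonneg _ _)) (by positivity),
    fun x y t ht htT => ?_⟩
  have key : |∫ r in Ioo (0:ℝ) 1, (DI d k h x t r - DI d k h y t r)| ≤
      ∫ r in Ioo (0:ℝ) 1, (C * A * |x - y| ^ α) * t ^ (-p - a) * (r ^ (-p) * (1 - r) ^ (-a)) := by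
    rw [← Real.norm_eq_abs]
    refine norm_integral_le_of_norm_le ((beta_integrable p0 p1 a0 a1).const_mul _) ?_
    filter_upwards [self_mem_ae_restrict measurableSet_Ioo] with r hr
    have h1 : 0 < 1 - r := by linarith [hr.2]
    have h0 : 0 < r := hr.1
    have hσ : 0 < √(t * r) := by positivity
    have hs : 0 < t * (1 - r) := by positivity
    have hsT : t * (1 - r) ≤ T := by nlinarith
    have := hQ (fun y => h y (t * (1 - r))) (Hc.slice hs) _ (fun x => hb x _ hs hsT) _ hσ x y
    rw [DI, DI, ← mul_sub, norm_mul, Real.norm_eq_abs, Real.norm_eq_abs, abs_of_pos (a := (√(t * r) ^ k)⁻¹) (by positivity)]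
    calc _ ≤ (√(t * r) ^ k)⁻¹ * (C * (A * (t * (1 - r)) ^ (-a)) * |x - y| ^ α * (√(t * r)) ^ (-α)) := by gcongr
      _ = ((√(t * r) ^ k)⁻¹ * (√(t * r)) ^ (-α)) * (C * (A * (t * (1 - r)) ^ (-a)) * |x - y| ^ α) := by ring
      _ = _ := by
        rw [sqrt_pow_inv (by positivity), ← hp, mul_rpow ht.le h0.le, mul_rpow ht.le h1.le, sub_eq_add_neg _ a, rpow_add ht]
        ring
  rw [Duh, Duh, ← mul_sub, ← integral_sub (DI_integrable H x ht) (DI_integrable H y ht), abs_mul, abs_of_pos ht]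
  rw [integral_const_mul] at key
  calc _ ≤ t * ((C * A * |x - y| ^ α) * t ^ (-p - a) * Be p a) := by gcongr; exact key
    _ = (C * A * Be p a) * |x - y| ^ α * (t ^ (1:ℝ) * t ^ (-p - a)) := by rw [rpow_one]; ring
    _ = (C * A * Be p a) * |x - y| ^ α * (t ^ (1 - p) * t ^ (-a)) := by
      rw [← rpow_add ht, ← rpow_add ht]; congr 2; ring
    _ ≤ (C * A * Be p a) * |x - y| ^ α * (T ^ (1 - p) * t ^ (-a)) := by
      have := Be_nonneg p a
      gcongr
    _ = _ := by ring

end HK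

namespace HK
open Real Filter Topology

lemma rpow_int {T a : ℝ} (hT : 0 < T) (a1 : a < 1) : IntegrableOn (fun s : ℝ => s ^ (-a)) (Ioo 0 T) := by
  have := intervalIntegral.intervalIntegrable_rpow' (a := 0) (b := T) (r := -a) (by linarith)
  rwa [intervalIntegrable_iff_integrableOn_Ioo_of_le hT.le] at this

lemma bd_int {g : ℝ → ℝ} (hg : ContinuousOn g (Ioi 0)) {a A T : ℝ} (hT : 0 < T) (a1 : a < 1)
    (hb : ∀ s, 0 < s → s ≤ T → |g s| ≤ A * s ^ (-a)) : IntegrableOn g (Ioo 0 T) := by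
  refine ((rpow_int hT a1).const_mul A).mono' ((hg.mono fun s hs => hs.1).aestronglyMeasurable measurableSet_Ioo) ?_
  filter_upwards [self_mem_ae_restrict measurableSet_Ioo] with s hs
  exact hb s hs.1 hs.2.le

lemma cov (Φ : ℝ → ℝ → ℝ) {t : ℝ} (ht : 0 < t) :
    t * ∫ r in Ioo (0:ℝ) 1, Φ (t * (1 - r)) (t * r) = ∫ s in Ioo 0 t, Φ s (t - s) := by
  have := intervalIntegral.mul_integral_comp_sub_mul (a := 0) (b := 1) (f := fun s => Φ s (t - s)) t t
  simp only [mul_one, sub_self, mul_zero, sub_zero] at this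
  rw [intervalIntegral.integral_of_le zero_le_one, intervalIntegral.integral_of_le ht.le,
    integral_Ioc_eq_integral_Ioo, integral_Ioc_eq_integral_Ioo] at this
  rw [← this]
  congr 1
  refine setIntegral_congr_fun measurableSet_Ioo fun r hr => ?_
  congr 1 <;> ring

lemma tri {P : ℝ → ℝ → ℝ} {T : ℝ} (hT : 0 < T)
    (hP : ContinuousOn (fun p : ℝ × ℝ => P p.1 p.2) {p | 0 < p.1 ∧ 0 < p.2})
    {C a q : ℝ} (a1 : a < 1) (q1 : q < 1)
    (hb : ∀ s τ, 0 < s → s ≤ T → 0 < τ → |P s τ| ≤ C * (s ^ (-a) * τ ^ (-q))) :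
    ∫ t in Ioo 0 T, ∫ s in Ioo 0 t, P s (t - s) = ∫ s in Ioo 0 T, ∫ t in Ioo s T, P s (t - s) := by
  set S : Set (ℝ × ℝ) := {p | 0 < p.2 ∧ p.2 < p.1 ∧ p.1 < T} with hS
  have hSo : IsOpen S := (isOpen_lt continuous_const continuous_snd).inter
    ((isOpen_lt continuous_snd continuous_fst).inter (isOpen_lt continuous_fst continuous_const))
  set F : ℝ → ℝ → ℝ := fun t s => S.indicator (fun p => P p.2 (p.1 - p.2)) (t, s) with hF
  have i1 := (rpow_int hT a1).integrable_indicator measurableSet_Ioo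
  have i2 := (rpow_int hT q1).integrable_indicator measurableSet_Ioo
  have hi : Integrable (Function.uncurry F) (volume.prod volume) := by
    refine ((Integrable.convolution_integrand (ContinuousLinearMap.mul ℝ ℝ) i1 i2).const_mul C).mono' ?_ ?_
    · have : Function.uncurry F = S.indicator (fun p => P p.2 (p.1 - p.2)) := by ext p; rfl
      rw [this]
      refine (aestronglyMeasurable_indicator_iff hSo.measurableSet).2
        (ContinuousOn.aestronglyMeasurable ?_ hSo.measurableSet)
      exact hP.comp (f := fun p : ℝ × ℝ => (p.2, p.1 - p.2)) (by fun_prop) (fun p hp => ⟨hp.1, sub_pos.2 hp.2.1⟩)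
    · refine ae_of_all _ fun p => ?_
      obtain ⟨t, s⟩ := p
      simp only [Function.uncurry, hF, ContinuousLinearMap.mul_apply']
      by_cases hp : (t, s) ∈ S
      · obtain ⟨h1, h2, h3⟩ := hp
        simp only at h1 h2 h3
        rw [indicator_of_mem (by exact ⟨h1, h2, h3⟩), indicator_of_mem (by constructor <;> linarith),
          indicator_of_mem (by constructor <;> linarith)]
        exact hb _ _ h1 (by linarith) (by simp only; linarith)
      · rw [indicator_of_notMem hp, norm_zero]
        have : ∀ b x : ℝ, 0 ≤ (Ioo 0 T).indicator (fun s : ℝ => s ^ (-b)) x := fun b x =>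
          indicator_nonneg (fun s hs => rpow_nonneg hs.1.le _) x
        have hC : 0 ≤ C := by
          have := (abs_nonneg _).trans (hb T T hT le_rfl hT)
          exact nonneg_of_mul_nonneg_left this (by positivity)
        exact mul_nonneg hC (mul_nonneg (this _ _) (this _ _))
  have := integral_integral_swap hi
  have e1 : ∀ t, ∫ s, F t s = (Ioo 0 T).indicator (fun t => ∫ s in Ioo 0 t, P s (t - s)) t := by
    intro t
    by_cases ht : t ∈ Ioo 0 T
    · rw [indicator_of_mem ht, ← integral_indicator measurableSet_Ioo]
      congr 1; ext s
      simp only [hF, indicator, hS, mem_ofPred_eq, mem_Ioo, ht.2, and_true]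
    · rw [indicator_of_notMem ht]
      rw [← integral_zero ℝ ℝ]
      congr 1; ext s
      refine indicator_of_notMem ?_ _
      rintro ⟨h1, h2, h3⟩
      exact ht ⟨by simp only at *; linarith, h3⟩
  have e2 : ∀ s, ∫ t, F t s = (Ioo 0 T).indicator (fun s => ∫ t in Ioo s T, P s (t - s)) s := by
    intro s
    by_cases hs : s ∈ Ioo 0 T
    · rw [indicator_of_mem hs, ← integral_indicator measurableSet_Ioo]
      congr 1; ext t
      simp only [hF, indicator, hS, mem_ofPred_eq, mem_Ioo, hs.1, true_and]
    · rw [indicator_of_notMem hs]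
      rw [← integral_zero ℝ ℝ]
      congr 1; ext t
      refine indicator_of_notMem ?_ _
      rintro ⟨h1, h2, h3⟩
      exact hs ⟨h1, by simp only at *; linarith⟩
  simp only [e1, e2] at this
  rwa [integral_indicator measurableSet_Ioo, integral_indicator measurableSet_Ioo] at this

lemma Q_zero {d : ℝ} (hd : 0 < d) (w : ℝ → ℝ) (x : ℝ) : Q (ker d 0) w 0 x = w x := by
  simp [Q, integral_const_mul, ker_zero_integral hd]

lemma Duh_eq (d : ℝ) (k : ℕ) (h : ℝ → ℝ → ℝ) (x : ℝ) {t : ℝ} (ht : 0 < t) :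
    Duh d k h x t = ∫ s in Ioo 0 t, ((√(t - s)) ^ k)⁻¹ * Q (ker d k) (fun y => h y s) (√(t - s)) x :=
  cov (fun s τ => ((√τ) ^ k)⁻¹ * Q (ker d k) (fun y => h y s) (√τ) x) ht

lemma Duh_time_int {d α a b : ℝ} (hd : 0 < d) (hα : 0 < α) (hα1 : α < 1) (a0 : 0 ≤ a) (a1 : a < 1) (b0 : 0 ≤ b) (b1 : b < 1)
    {h : ℝ → ℝ → ℝ} (H : Cont h) (Hb : Bd a h) (Hh : Hol α b h) (x : ℝ) {T : ℝ} (hT : 0 < T) :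
    IntegrableOn (fun t => h x t) (Ioo 0 T) ∧ IntegrableOn (fun t => Duh d 2 h x t) (Ioo 0 T) ∧
    Duh d 0 h x T = ∫ t in Ioo 0 T, (h x t + d * Duh d 2 h x t) := by
  have A2 := Adm.of_hol hd hα hα1 a0 b0 b1 H Hb Hh
  have sl : ∀ {g : ℝ → ℝ → ℝ}, Cont g → ContinuousOn (fun t => g x t) (Ioi 0) := fun Hg =>
    ContinuousOn.comp (f := fun t : ℝ => (x, t)) Hg (by fun_prop) (fun t ht => ht)
  have i1 : IntegrableOn (fun t => h x t) (Ioo 0 T) := by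
    obtain ⟨A, hA, hb⟩ := Hb T hT
    exact bd_int (sl H) hT a1 (hb x)
  have i2 : IntegrableOn (fun t => Duh d 2 h x t) (Ioo 0 T) := by
    obtain ⟨A, hA, hb⟩ := Duh_bound A2 T hT
    exact bd_int (sl (Duh_cont A2)) hT (by push_cast; linarith) (hb x)
  refine ⟨i1, i2, ?_⟩
  set P : ℝ → ℝ → ℝ := fun s τ => τ⁻¹ * Q (ker d 2) (fun y => h y s) (√τ) x with hP
  obtain ⟨A, hA, hq⟩ := A2.qb T hT
  have hPb : ∀ s τ, 0 < s → s ≤ T → 0 < τ → |P s τ| ≤ A * (s ^ (-b) * τ ^ (-(1 - α/2))) := by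
    intro s τ hs hsT hτ
    rw [hP]
    simp only
    rw [abs_mul, abs_of_pos (by positivity)]
    calc _ ≤ τ⁻¹ * (A * (√τ) ^ α * s ^ (-b)) := by
          gcongr; exact hq x s _ hs hsT (by positivity)
      _ = A * (s ^ (-b) * (((√τ) ^ 2)⁻¹ * (√τ) ^ α)) := by rw [sq_sqrt hτ.le]; ring
      _ = _ := by rw [sqrt_pow_inv hτ]; congr 3; push_cast; ring
  have hPc : ContinuousOn (fun p : ℝ × ℝ => P p.1 p.2) {p | 0 < p.1 ∧ 0 < p.2} := by
    refine ContinuousOn.mul (ContinuousOn.inv₀ (by fun_prop) fun p hp => hp.2.ne') ?_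
    exact (Q_cont (ker_integrable hd 2) (ker_cont d 2) H a0 Hb).comp
      (f := fun p : ℝ × ℝ => (x, p.1, √p.2)) (by fun_prop) (fun p hp => hp.1)
  have ht := tri hT hPc b1 (by linarith) hPb
  have key : ∀ s ∈ Ioo 0 T, Q (ker d 0) (fun y => h y s) (√(T - s)) x = h x s + d * ∫ t in Ioo s T, P s (t - s) := by
    intro s hs
    have hτ : 0 < T - s := by linarith [hs.2]
    obtain ⟨B, hB, hb⟩ := Hb T hT
    have iP : IntegrableOn (P s) (Ioo 0 (T - s)) := by
      refine bd_int ?_ hτ (a := 1 - α/2) (A := A * s ^ (-b)) (by linarith) ?_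
      · exact hPc.comp (f := fun t : ℝ => (s, t)) (by fun_prop) (fun t ht => ⟨hs.1, ht⟩)
      · intro τ h1 h2
        exact (hPb s τ hs.1 hs.2.le h1).trans (le_of_eq (by ring))
    have ftc := intervalIntegral.integral_eq_sub_of_hasDerivAt_of_le (a := 0) (b := T - s) hτ.le
      (f := fun τ => Q (ker d 0) (fun y => h y s) (√τ) x) (f' := fun τ => d * P s τ) ?_ ?_ ?_
    · rw [sqrt_zero, Q_zero hd] at ftc
      have e : ∫ t in Ioo s T, P s (t - s) = ∫ τ in (0:ℝ)..(T - s), P s τ := by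
        have := intervalIntegral.integral_comp_sub_right (a := s) (b := T) (P s) s
        rw [sub_self] at this
        rw [← this, intervalIntegral.integral_of_le hs.2.le, integral_Ioc_eq_integral_Ioo]
      rw [e]
      rw [intervalIntegral.integral_const_mul] at ftc
      linarith
    · exact (Q_cont (ker_integrable hd 0) (ker_cont d 0) H a0 Hb).comp
        (f := fun τ : ℝ => (x, s, √τ)) (by fun_prop) (fun p hp => hs.1)
    · intro τ hτ
      exact Q_time hd (H.slice hs.1) (fun x => hb x s hs.1 hs.2.le) x hτ.1
    · rw [intervalIntegrable_iff_integrableOn_Ioo_of_le hτ.le]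
      exact iP.const_mul d
  rw [Duh_eq d 0 h x hT]
  have e0 : ∫ s in Ioo 0 T, ((√(T - s)) ^ 0)⁻¹ * Q (ker d 0) (fun y => h y s) (√(T - s)) x
      = ∫ s in Ioo 0 T, (h x s + d * ∫ t in Ioo s T, P s (t - s)) := by
    refine setIntegral_congr_fun measurableSet_Ioo fun s hs => ?_
    simp only [pow_zero, inv_one, one_mul]
    exact key s hs
  have e1 : ∫ s in Ioo 0 T, (d * ∫ t in Ioo s T, P s (t - s)) = ∫ t in Ioo 0 T, d * Duh d 2 h x t := by
    rw [integral_const_mul, ← ht, integral_const_mul]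
    congr 1
    refine setIntegral_congr_fun measurableSet_Ioo fun t ht => ?_
    rw [Duh_eq d 2 h x ht.1]
    refine setIntegral_congr_fun measurableSet_Ioo fun s hs => ?_
    simp only [hP]
    rw [sq_sqrt (by linarith [hs.2])]
  rw [e0, integral_add i1 (i2.const_mul d), ← e1, integral_add i1]
  have : IntegrableOn (fun s => Q (ker d 0) (fun y => h y s) (√(T - s)) x - h x s) (Ioo 0 T) := by
    refine IntegrableOn.sub ?_ i1
    obtain ⟨B, hB, hb⟩ := Hb T hT
    refine ((rpow_int hT a1).const_mul (B * ∫ z, |ker d 0 z|)).mono' ?_ ?_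
    · refine ContinuousOn.aestronglyMeasurable ?_ measurableSet_Ioo
      exact (Q_cont (ker_integrable hd 0) (ker_cont d 0) H a0 Hb).comp
        (f := fun s : ℝ => (x, s, √(T - s))) (by fun_prop) (fun p hp => hp.1)
    · filter_upwards [self_mem_ae_restrict measurableSet_Ioo] with s hs
      have := Q_bound (ker_integrable hd 0) (w := fun y => h y s) (fun x => hb x s hs.1 hs.2.le) (√(T - s)) x
      rw [Real.norm_eq_abs]
      exact this.trans (le_of_eq (by ring))
  refine this.congr_fun (fun s hs => ?_) measurableSet_Ioo
  simp only
  rw [key s hs]; ring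

lemma Duh_time {d α a b : ℝ} (hd : 0 < d) (hα : 0 < α) (hα1 : α < 1) (a0 : 0 ≤ a) (a1 : a < 1) (b0 : 0 ≤ b) (b1 : b < 1)
    {h : ℝ → ℝ → ℝ} (H : Cont h) (Hb : Bd a h) (Hh : Hol α b h) (x : ℝ) {t : ℝ} (ht : 0 < t) :
    HasDerivAt (fun t => Duh d 0 h x t) (h x t + d * Duh d 2 h x t) t := by
  have A2 := Adm.of_hol hd hα hα1 a0 b0 b1 H Hb Hh
  have hc : ContinuousOn (fun t => h x t + d * Duh d 2 h x t) (Ioi 0) := by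
    have sl : ∀ {g : ℝ → ℝ → ℝ}, Cont g → ContinuousOn (fun t => g x t) (Ioi 0) := fun Hg =>
      ContinuousOn.comp (f := fun t : ℝ => (x, t)) Hg (by fun_prop) (fun t ht => ht)
    exact (sl H).add (continuousOn_const.mul (sl (Duh_cont A2)))
  obtain ⟨i1, i2, -⟩ := Duh_time_int hd hα hα1 a0 a1 b0 b1 H Hb Hh x ht
  have := intervalIntegral.integral_hasDerivAt_right (a := 0) (b := t) (f := fun t => h x t + d * Duh d 2 h x t)
    (by rw [intervalIntegrable_iff_integrableOn_Ioo_of_le ht.le]; exact i1.add (i2.const_mul d))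
    (hc.stronglyMeasurableAtFilter isOpen_Ioi t ht) (hc.continuousAt (Ioi_mem_nhds ht))
  refine this.congr_of_eventuallyEq ?_
  filter_upwards [lt_mem_nhds ht] with T hT
  rw [(Duh_time_int hd hα hα1 a0 a1 b0 b1 H Hb Hh x hT).2.2, intervalIntegral.integral_of_le hT.le,
    integral_Ioc_eq_integral_Ioo]

end HK

namespace HK
open Real Filter Topology

def Hom (d : ℝ) (k : ℕ) (u0 : ℝ → ℝ) (x t : ℝ) : ℝ := ((√t) ^ k)⁻¹ * Q (ker d k) u0 (√t) x

section hom
variable {d : ℝ} {k : ℕ} {u0 : ℝ → ℝ} {B : ℝ}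

lemma Qs_cont (hd : 0 < d) (hu : Continuous u0) (hB : ∀ x, |u0 x| ≤ B) :
    Continuous (fun p : ℝ × ℝ => Q (ker d k) u0 (√p.2) p.1) := by
  have hc : Cont (fun x _ => u0 x) := Continuous.continuousOn (by fun_prop)
  have hb : Bd 0 (fun x _ => u0 x) := fun T hT => ⟨B, (abs_nonneg _).trans (hB 0), fun x s _ _ => by simpa using hB x⟩
  exact (Q_cont (ker_integrable hd k) (ker_cont d k) hc le_rfl hb).comp_continuous
    (f := fun p : ℝ × ℝ => (p.1, (1:ℝ), √p.2)) (by fun_prop) (fun p => by simp)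

lemma Hom_cont0 (hd : 0 < d) (hu : Continuous u0) (hB : ∀ x, |u0 x| ≤ B) :
    Continuous (fun p : ℝ × ℝ => Hom d 0 u0 p.1 p.2) := by
  simpa [Hom] using Qs_cont (k := 0) hd hu hB

lemma Hom_cont (hd : 0 < d) (hu : Continuous u0) (hB : ∀ x, |u0 x| ≤ B) : Cont (Hom d k u0) := by
  refine ContinuousOn.mul (ContinuousOn.inv₀ (by fun_prop) fun p hp => ?_) (Qs_cont hd hu hB).continuousOn
  have : 0 < p.2 := hp
  positivity

lemma Hom_zero (hd : 0 < d) (x : ℝ) : Hom d 0 u0 x 0 = u0 x := by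
  simp [Hom, Q_zero hd]

lemma Hom_bd (hd : 0 < d) (hB : ∀ x, |u0 x| ≤ B) : Bd (k / 2) (Hom d k u0) := by
  intro T hT
  refine ⟨B * ∫ z, |ker d k z|, mul_nonneg ((abs_nonneg _).trans (hB 0)) (integral_nonneg fun _ => abs_nonneg _),
    fun x t ht _ => ?_⟩
  rw [Hom, abs_mul, abs_of_pos (by positivity)]
  have h1 := sqrt_pow_inv ht k 0
  rw [rpow_zero, mul_one, sub_zero] at h1
  rw [h1, mul_comm]
  gcongr
  exact Q_bound (ker_integrable hd k) hB _ x

lemma Hom_deriv (hd : 0 < d) (hu : Continuous u0) (hB : ∀ x, |u0 x| ≤ B) (hk : k ≤ 1) (x : ℝ) {t : ℝ} (ht : 0 < t) :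
    HasDerivAt (fun x => Hom d k u0 x t) (Hom d (k+1) u0 x t) x := by
  have := (Q_deriv hd hk hu hB (σ := √t) (by positivity) x).const_mul ((√t) ^ k)⁻¹
  refine this.congr_deriv ?_
  rw [Hom, pow_succ, mul_inv, mul_assoc]

lemma Hom_time (hd : 0 < d) (hu : Continuous u0) (hB : ∀ x, |u0 x| ≤ B) (x : ℝ) {t : ℝ} (ht : 0 < t) :
    HasDerivAt (fun t => Hom d 0 u0 x t) (d * Hom d 2 u0 x t) t := by
  have := Q_time hd hu hB x ht
  simp only [Hom, pow_zero, inv_one, one_mul]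
  refine this.congr_deriv ?_
  rw [sq_sqrt ht.le]

lemma Hom_hol0 {α A : ℝ} (hd : 0 < d) (hu : Continuous u0) (hB : ∀ x, |u0 x| ≤ B)
    (hA : ∀ x y, |u0 x - u0 y| ≤ A * |x - y| ^ α) : Hol α 0 (Hom d 0 u0) := by
  intro T hT
  have hA0 : 0 ≤ A := by
    have := (abs_nonneg _).trans (hA 0 1)
    simpa using this
  refine ⟨A * ∫ z, |ker d 0 z|, mul_nonneg hA0 (integral_nonneg fun _ => abs_nonneg _),
    fun x y t ht _ => ?_⟩
  simp only [Hom, pow_zero, inv_one, one_mul, neg_zero, rpow_zero, mul_one]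
  have e : Q (ker d 0) u0 (√t) x - Q (ker d 0) u0 (√t) y = ∫ z, (u0 (x + √t * z) - u0 (y + √t * z)) * ker d 0 z := by
    simp only [sub_mul]
    rw [integral_sub (Q_integrable (ker_integrable hd _) hu hB _ x) (Q_integrable (ker_integrable hd _) hu hB _ y), Q, Q]
  have : |Q (ker d 0) u0 (√t) x - Q (ker d 0) u0 (√t) y| ≤ ∫ z, A * |x - y| ^ α * |ker d 0 z| := by
    rw [e, ← Real.norm_eq_abs]
    refine norm_integral_le_of_norm_le ((ker_integrable hd 0).abs.const_mul _) (ae_of_all _ fun z => ?_)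
    rw [norm_mul]
    refine mul_le_mul_of_nonneg_right ?_ (abs_nonneg _)
    refine (hA _ _).trans (le_of_eq ?_)
    congr 3; ring
  rw [integral_const_mul] at this
  exact this.trans (le_of_eq (by ring))

lemma Hom_hol1 {α : ℝ} (hd : 0 < d) (hα : 0 < α) (hα1 : α < 1) (hu : Continuous u0) (hB : ∀ x, |u0 x| ≤ B) :
    Hol α ((1 + α) / 2) (Hom d 1 u0) := by
  obtain ⟨C, hC, hQ⟩ := Q_diff hd hα hα1 (k := 1) le_rfl
  intro T hT
  refine ⟨C * B, mul_nonneg hC ((abs_nonneg _).trans (hB 0)), fun x y t ht _ => ?_⟩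
  rw [Hom, Hom, ← mul_sub, abs_mul, abs_of_pos (by positivity)]
  calc _ ≤ ((√t) ^ 1)⁻¹ * (C * B * |x - y| ^ α * (√t) ^ (-α)) := by
        gcongr; exact hQ u0 hu B hB _ (by positivity) x y
    _ = C * B * |x - y| ^ α * (((√t) ^ 1)⁻¹ * (√t) ^ (-α)) := by ring
    _ = _ := by rw [sqrt_pow_inv ht]; congr 3; push_cast; ring

end hom

lemma Bd.add {a : ℝ} {h h' : ℝ → ℝ → ℝ} (H : Bd a h) (H' : Bd a h') : Bd a (fun x t => h x t + h' x t) := by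
  intro T hT
  obtain ⟨A, hA, h1⟩ := H T hT
  obtain ⟨A', hA', h1'⟩ := H' T hT
  refine ⟨A + A', by positivity, fun x s hs hsT => (abs_add_le _ _).trans ?_⟩
  rw [add_mul]
  exact add_le_add (h1 x s hs hsT) (h1' x s hs hsT)

lemma Hol.add {α a : ℝ} {h h' : ℝ → ℝ → ℝ} (H : Hol α a h) (H' : Hol α a h') : Hol α a (fun x t => h x t + h' x t) := by
  intro T hT
  obtain ⟨A, hA, h1⟩ := H T hT
  obtain ⟨A', hA', h1'⟩ := H' T hT
  refine ⟨A + A', by positivity, fun x y s hs hsT => ?_⟩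
  rw [add_sub_add_comm]
  refine (abs_add_le _ _).trans ?_
  rw [add_mul, add_mul]
  exact add_le_add (h1 x y s hs hsT) (h1' x y s hs hsT)

lemma Cont.add {h h' : ℝ → ℝ → ℝ} (H : Cont h) (H' : Cont h') : Cont (fun x t => h x t + h' x t) :=
  ContinuousOn.add H H'

lemma Hol.congr {α a : ℝ} {h h' : ℝ → ℝ → ℝ} (H : Hol α a h) (e : ∀ x t, 0 < t → h' x t = h x t) : Hol α a h' := by
  intro T hT
  obtain ⟨A, hA, h1⟩ := H T hT
  exact ⟨A, hA, fun x y s hs hsT => by rw [e x s hs, e y s hs]; exact h1 x y s hs hsT⟩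

lemma Duh_add {d : ℝ} {k : ℕ} {h h' : ℝ → ℝ → ℝ} (hd : 0 < d) (hk : k ≤ 1) {a : ℝ} (a0 : 0 ≤ a) (a1 : a < 1)
    (Hc : Cont h) (Hb : Bd a h) (Hc' : Cont h') (Hb' : Bd a h') (x : ℝ) {t : ℝ} (ht : 0 < t) :
    Duh d k (fun x t => h x t + h' x t) x t = Duh d k h x t + Duh d k h' x t := by
  have := Duh_sub (Adm.of_bd hd hk a0 a1 (Hc.add Hc') (Hb.add Hb')) (Adm.of_bd hd hk a0 a1 Hc' Hb') x ht
  simp only [add_sub_cancel_right] at this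
  linarith

lemma Q_ibp {d : ℝ} (hd : 0 < d) {w w' : ℝ → ℝ} (hw : ∀ x, HasDerivAt w (w' x) x) (hw' : Continuous w') {A A' : ℝ}
    (hA : ∀ x, |w x| ≤ A) (hA' : ∀ x, |w' x| ≤ A') {σ : ℝ} (hσ : 0 < σ) (x : ℝ) :
    σ⁻¹ * Q (ker d 1) w σ x = Q (ker d 0) w' σ x := by
  have hwc : Continuous w := continuous_iff_continuousAt.2 fun x => (hw x).continuousAt
  have h1 := Q_deriv hd (k := 0) (by norm_num) hwc hA hσ x
  refine h1.unique ?_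
  refine (hasDerivAt_integral_of_dominated_loc_of_deriv_le (s := univ) univ_mem (F := fun x z => w (x + σ * z) * ker d 0 z)
    (F' := fun x z => w' (x + σ * z) * ker d 0 z) (bound := fun z => A' * |ker d 0 z|)
    ?_ (Q_integrable (ker_integrable hd 0) hwc hA σ x)
    (Q_integrable (ker_integrable hd 0) hw' hA' σ x).aestronglyMeasurable ?_
    ((ker_integrable hd 0).abs.const_mul _) ?_).2
  · exact Eventually.of_forall fun x => (Q_integrable (ker_integrable hd 0) hwc hA σ x).aestronglyMeasurable
  · refine ae_of_all _ fun z x _ => ?_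
    rw [norm_mul]
    exact mul_le_mul_of_nonneg_right (hA' _) (abs_nonneg _)
  · refine ae_of_all _ fun z x _ => ?_
    exact ((hw _).comp_add_const x (σ * z)).mul_const _

lemma Duh_ibp {d : ℝ} (hd : 0 < d) {G Gx : ℝ → ℝ → ℝ} {a : ℝ} (HG : Bd 0 G) (Hc : Cont Gx) (Hb : Bd a Gx)
    (hD : ∀ x t, 0 < t → HasDerivAt (fun x => G x t) (Gx x t) x) (x : ℝ) {t : ℝ} (ht : 0 < t) :
    Duh d 1 G x t = Duh d 0 Gx x t := by
  unfold Duh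
  congr 1
  refine setIntegral_congr_fun measurableSet_Ioo fun r hr => ?_
  have hs : 0 < t * (1 - r) := mul_pos ht (sub_pos.2 hr.2)
  have hσ : 0 < √(t * r) := by have := mul_pos ht hr.1; positivity
  obtain ⟨A, hA, h1⟩ := HG _ hs
  obtain ⟨A', hA', h1'⟩ := Hb _ hs
  simp only [DI, pow_one, pow_zero, inv_one, one_mul]
  exact Q_ibp hd (fun x => hD x _ hs) (Hc.slice hs) (fun x => h1 x _ hs le_rfl) (fun x => h1' x _ hs le_rfl) hσ x

def sh (c : ℝ) (h : ℝ → ℝ → ℝ) (x t : ℝ) : ℝ := h (x - c * t) t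

lemma sh_sh (c : ℝ) (h : ℝ → ℝ → ℝ) : sh (-c) (sh c h) = h := by
  ext x t; simp [sh]

lemma Cont.sh {h : ℝ → ℝ → ℝ} (H : Cont h) (c : ℝ) : Cont (sh c h) :=
  ContinuousOn.comp (f := fun p : ℝ × ℝ => (p.1 - c * p.2, p.2)) H (by fun_prop) (fun p hp => hp)

lemma Bd.sh {a : ℝ} {h : ℝ → ℝ → ℝ} (H : Bd a h) (c : ℝ) : Bd a (sh c h) := by
  intro T hT
  obtain ⟨A, hA, h1⟩ := H T hT
  exact ⟨A, hA, fun x s hs hsT => h1 _ s hs hsT⟩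

lemma Hol.sh {α a : ℝ} {h : ℝ → ℝ → ℝ} (H : Hol α a h) (c : ℝ) : Hol α a (sh c h) := by
  intro T hT
  obtain ⟨A, hA, h1⟩ := H T hT
  refine ⟨A, hA, fun x y s hs hsT => (h1 _ _ s hs hsT).trans (le_of_eq ?_)⟩
  congr 4; ring

lemma sh_deriv {h h' : ℝ → ℝ → ℝ} (c : ℝ) {t : ℝ} (H : ∀ x, HasDerivAt (fun x => h x t) (h' x t) x) (x : ℝ) :
    HasDerivAt (fun x => sh c h x t) (sh c h' x t) x := by
  have := (H (x - c * t)).comp_sub_const x (c * t)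
  exact this

def Psi0 (d : ℝ) (u0 : ℝ → ℝ) (F G : ℝ → ℝ → ℝ) (x t : ℝ) : ℝ :=
  Hom d 0 u0 x t + Duh d 0 F x t + Duh d 1 G x t

def Psi (d c : ℝ) (u0 : ℝ → ℝ) (F G : ℝ → ℝ → ℝ) : ℝ → ℝ → ℝ := sh (-c) (Psi0 d u0 (sh c F) (sh c G))

end HK

namespace HK
open Real Filter Topology

lemma chain {U Ux Ut : ℝ → ℝ → ℝ} (c : ℝ) (h1 : ∀ x t, 0 < t → HasDerivAt (fun x => U x t) (Ux x t) x)
    (h2 : ∀ x t, 0 < t → HasDerivAt (fun t => U x t) (Ut x t) t) (c1 : Cont Ux) (c2 : Cont Ut) (x : ℝ) {t : ℝ} (ht : 0 < t) :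
    HasDerivAt (fun t => sh (-c) U x t) (c * sh (-c) Ux x t + sh (-c) Ut x t) t := by
  have key := hasStrictFDerivAt_uncurry_coprod (𝕜 := ℝ) (u := (x - -c * t, t)) (f := U)
    (f₁ := fun x t => ContinuousLinearMap.toSpanSingleton ℝ (Ux x t))
    (f₂ := fun x t => ContinuousLinearMap.toSpanSingleton ℝ (Ut x t)) ?_ ?_ ?_ ?_
  · have hl : HasDerivAt (fun t => (x - -c * t, t)) (c, (1:ℝ)) t := by
      refine HasDerivAt.prodMk ?_ (hasDerivAt_id t)
      have := ((hasDerivAt_id t).const_mul (-c)).const_sub x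
      simpa using this
    have := HasFDerivAt.comp_hasDerivAt (f := fun t => (x - -c * t, t)) t key.hasFDerivAt hl
    refine this.congr_deriv ?_
    simp [sh, Function.HasUncurry.uncurry]
  · filter_upwards [isOpen_pos2.mem_nhds (show (x - -c * t, t) ∈ {p : ℝ × ℝ | 0 < p.2} from ht)] with p hp
    exact (h1 p.1 p.2 hp).hasFDerivAt
  · filter_upwards [isOpen_pos2.mem_nhds (show (x - -c * t, t) ∈ {p : ℝ × ℝ | 0 < p.2} from ht)] with p hp
    exact (h2 p.1 p.2 hp).hasFDerivAt
  · have := c1.continuousAt (isOpen_pos2.mem_nhds (show (x - -c * t, t) ∈ {p : ℝ × ℝ | 0 < p.2} from ht))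
    exact (ContinuousLinearMap.toSpanSingletonCLE (𝕜 := ℝ) (E := ℝ)).continuous.continuousAt.comp this
  · have := c2.continuousAt (isOpen_pos2.mem_nhds (show (x - -c * t, t) ∈ {p : ℝ × ℝ | 0 < p.2} from ht))
    exact (ContinuousLinearMap.toSpanSingletonCLE (𝕜 := ℝ) (E := ℝ)).continuous.continuousAt.comp this

section
variable {d : ℝ} {u0 : ℝ → ℝ} {B α A : ℝ} {F G : ℝ → ℝ → ℝ}

lemma Psi0_cont (hd : 0 < d) (hu : Continuous u0) (hB : ∀ x, |u0 x| ≤ B) (cF : Cont F) (bF : Bd 0 F) (cG : Cont G) (bG : Bd 0 G) :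
    Cont (Psi0 d u0 F G) :=
  ((Hom_cont hd hu hB).add (Duh_cont (Adm.of_bd hd (by norm_num) le_rfl one_pos cF bF))).add
    (Duh_cont (Adm.of_bd hd (by norm_num) le_rfl one_pos cG bG))

lemma Psi0_hol (hd : 0 < d) (hα : 0 < α) (hα1 : α < 1) (hu : Continuous u0) (hB : ∀ x, |u0 x| ≤ B)
    (hA : ∀ x y, |u0 x - u0 y| ≤ A * |x - y| ^ α)
    (cF : Cont F) (bF : Bd 0 F) (cG : Cont G) (bG : Bd 0 G) : Hol α 0 (Psi0 d u0 F G) :=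
  ((Hom_hol0 hd hu hB hA).add (Duh_hol hd hα hα1 (by norm_num) le_rfl one_pos cF bF)).add
    (Duh_hol hd hα hα1 (by norm_num) le_rfl one_pos cG bG)

lemma Psi0_dx (hd : 0 < d) (hα : 0 < α) (hα1 : α < 1) (hu : Continuous u0) (hB : ∀ x, |u0 x| ≤ B)
    (cF : Cont F) (bF : Bd 0 F) (cG : Cont G) (bG : Bd 0 G) (hG : Hol α 0 G) :
    ∃ ux, Cont ux ∧ Bd (1/2) ux ∧ ∀ x t, 0 < t → HasDerivAt (fun x => Psi0 d u0 F G x t) (ux x t) x := by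
  have aF0 := Adm.of_bd hd (k := 0) (by norm_num) le_rfl one_pos cF bF
  have aF1 := Adm.of_bd hd (k := 1) (by norm_num) le_rfl one_pos cF bF
  have aG1 := Adm.of_bd hd (k := 1) (by norm_num) le_rfl one_pos cG bG
  have aG2 := Adm.of_hol hd hα hα1 le_rfl le_rfl one_pos cG bG hG
  refine ⟨fun x t => Hom d 1 u0 x t + Duh d 1 F x t + Duh d 2 G x t,
    ((Hom_cont hd hu hB).add (Duh_cont aF1)).add (Duh_cont aG2), ?_, fun x t ht => ?_⟩
  · refine Bd.add (Bd.add ?_ ?_) ?_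
    · exact (Hom_bd (k := 1) hd hB).weak (by norm_num)
    · exact (Duh_bound aF1).weak (by norm_num)
    · exact (Duh_bound aG2).weak (by push_cast; linarith)
  · exact ((Hom_deriv hd hu hB (by norm_num) x ht).add (Duh_deriv aF0 aF1 (by norm_num) x ht)).add
      (Duh_deriv aG1 aG2 le_rfl x ht)

lemma Psi0_ibp (hd : 0 < d) (cF : Cont F) (bF : Bd 0 F) (bG : Bd 0 G)
    {Gx : ℝ → ℝ → ℝ} (cx : Cont Gx) (bx : Bd (1/2) Gx) (hD : ∀ x t, 0 < t → HasDerivAt (fun x => G x t) (Gx x t) x)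
    (x : ℝ) {t : ℝ} (ht : 0 < t) :
    Psi0 d u0 F G x t = Hom d 0 u0 x t + Duh d 0 (fun x t => F x t + Gx x t) x t := by
  rw [Psi0, Duh_ibp hd bG cx bx hD x ht,
    Duh_add hd (by norm_num) (a := 1/2) (by norm_num) (by norm_num) cF (bF.weak (by norm_num)) cx bx x ht, add_assoc]

lemma Psi0_dx_hol (hd : 0 < d) (hα : 0 < α) (hα1 : α < 1) (hu : Continuous u0) (hB : ∀ x, |u0 x| ≤ B)
    (cF : Cont F) (bF : Bd 0 F) (bG : Bd 0 G)
    {Gx : ℝ → ℝ → ℝ} (cx : Cont Gx) (bx : Bd (1/2) Gx) (hD : ∀ x t, 0 < t → HasDerivAt (fun x => G x t) (Gx x t) x)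
    {ux : ℝ → ℝ → ℝ} (hux : ∀ x t, 0 < t → HasDerivAt (fun x => Psi0 d u0 F G x t) (ux x t) x) :
    Hol α ((1 + α) / 2) ux := by
  have ch := cF.add cx
  have bh : Bd (1/2) (fun x t => F x t + Gx x t) := (bF.weak (by norm_num)).add bx
  have a0 := Adm.of_bd hd (k := 0) (by norm_num) (by norm_num) (by norm_num) ch bh
  have a1 := Adm.of_bd hd (k := 1) (by norm_num) (by norm_num) (by norm_num) ch bh
  refine Hol.congr (h := fun x t => Hom d 1 u0 x t + Duh d 1 (fun x t => F x t + Gx x t) x t) ?_ ?_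
  · exact (Hom_hol1 hd hα hα1 hu hB).add ((Duh_hol hd hα hα1 le_rfl (by norm_num) (by norm_num) ch bh).weak (by linarith))
  · intro x t ht
    refine (hux x t ht).unique ?_
    refine ((Hom_deriv hd hu hB (by norm_num) x ht).add (Duh_deriv a0 a1 (by norm_num) x ht)).congr_of_eventuallyEq ?_
    exact Eventually.of_forall fun y => Psi0_ibp hd cF bF bG cx bx hD y ht

lemma Psi0_full (hd : 0 < d) (hα : 0 < α) (hα1 : α < 1) (hu : Continuous u0) (hB : ∀ x, |u0 x| ≤ B)
    (cF : Cont F) (bF : Bd 0 F) (bG : Bd 0 G)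
    {Gx : ℝ → ℝ → ℝ} (cx : Cont Gx) (bx : Bd (1/2) Gx) (hD : ∀ x t, 0 < t → HasDerivAt (fun x => G x t) (Gx x t) x)
    (hh : Hol α ((1 + α) / 2) (fun x t => F x t + Gx x t)) :
    ∃ ut ux uxx, Cont ut ∧ Cont ux ∧ Cont uxx ∧ ∀ x t, 0 < t →
      HasDerivAt (fun x => Psi0 d u0 F G x t) (ux x t) x ∧ HasDerivAt (fun x => ux x t) (uxx x t) x ∧
      HasDerivAt (fun t => Psi0 d u0 F G x t) (ut x t) t ∧ ut x t = d * uxx x t + (F x t + Gx x t) := by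
  have ch := cF.add cx
  have bh : Bd (1/2) (fun x t => F x t + Gx x t) := (bF.weak (by norm_num)).add bx
  have a0 := Adm.of_bd hd (k := 0) (by norm_num) (by norm_num) (by norm_num) ch bh
  have a1 := Adm.of_bd hd (k := 1) (by norm_num) (by norm_num) (by norm_num) ch bh
  have a2 := Adm.of_hol hd hα hα1 (by norm_num) (by linarith) (by linarith) ch bh hh
  set h := (fun x t => F x t + Gx x t) with hh0
  refine ⟨fun x t => d * (Hom d 2 u0 x t + Duh d 2 h x t) + h x t, fun x t => Hom d 1 u0 x t + Duh d 1 h x t,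
    fun x t => Hom d 2 u0 x t + Duh d 2 h x t, ?_, (Hom_cont hd hu hB).add (Duh_cont a1),
    (Hom_cont hd hu hB).add (Duh_cont a2), fun x t ht => ⟨?_, ?_, ?_, rfl⟩⟩
  · exact (ContinuousOn.mul continuousOn_const ((Hom_cont hd hu hB).add (Duh_cont a2))).add ch
  · refine ((Hom_deriv hd hu hB (by norm_num) x ht).add (Duh_deriv a0 a1 (by norm_num) x ht)).congr_of_eventuallyEq ?_
    exact Eventually.of_forall fun y => Psi0_ibp hd cF bF bG cx bx hD y ht
  · exact ((Hom_deriv hd hu hB (by norm_num) x ht).add (Duh_deriv a1 a2 (by norm_num) x ht))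
  · have := (Hom_time hd hu hB x ht).add (Duh_time hd hα hα1 (by norm_num) (by norm_num) (by linarith) (by linarith) ch bh hh x ht)
    refine (this.congr_of_eventuallyEq ?_).congr_deriv ?_
    · filter_upwards [lt_mem_nhds ht] with s hs
      exact Psi0_ibp hd cF bF bG cx bx hD x hs
    · simp only [hh0]; ring

end

section
variable {d c : ℝ} {u0 : ℝ → ℝ} {B α A : ℝ} {F G : ℝ → ℝ → ℝ}

lemma Psi_cont (hd : 0 < d) (hu : Continuous u0) (hB : ∀ x, |u0 x| ≤ B) (cF : Cont F) (bF : Bd 0 F) (cG : Cont G) (bG : Bd 0 G) :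
    Cont (Psi d c u0 F G) :=
  (Psi0_cont hd hu hB (cF.sh c) (bF.sh c) (cG.sh c) (bG.sh c)).sh _

lemma Psi_hol (hd : 0 < d) (hα : 0 < α) (hα1 : α < 1) (hu : Continuous u0) (hB : ∀ x, |u0 x| ≤ B)
    (hA : ∀ x y, |u0 x - u0 y| ≤ A * |x - y| ^ α)
    (cF : Cont F) (bF : Bd 0 F) (cG : Cont G) (bG : Bd 0 G) : Hol α 0 (Psi d c u0 F G) :=
  (Psi0_hol hd hα hα1 hu hB hA (cF.sh c) (bF.sh c) (cG.sh c) (bG.sh c)).sh _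

lemma Psi_dx (hd : 0 < d) (hα : 0 < α) (hα1 : α < 1) (hu : Continuous u0) (hB : ∀ x, |u0 x| ≤ B)
    (cF : Cont F) (bF : Bd 0 F) (cG : Cont G) (bG : Bd 0 G) (hG : Hol α 0 G) :
    ∃ ux, Cont ux ∧ Bd (1/2) ux ∧ ∀ x t, 0 < t → HasDerivAt (fun x => Psi d c u0 F G x t) (ux x t) x := by
  obtain ⟨ux, h1, h2, h3⟩ := Psi0_dx hd hα hα1 hu hB (cF.sh c) (bF.sh c) (cG.sh c) (bG.sh c) (hG.sh c)
  exact ⟨sh (-c) ux, h1.sh _, h2.sh _, fun x t ht => sh_deriv _ (fun x => h3 x t ht) x⟩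

lemma Psi_dx_hol (hd : 0 < d) (hα : 0 < α) (hα1 : α < 1) (hu : Continuous u0) (hB : ∀ x, |u0 x| ≤ B)
    (cF : Cont F) (bF : Bd 0 F) (bG : Bd 0 G)
    {Gx : ℝ → ℝ → ℝ} (cx : Cont Gx) (bx : Bd (1/2) Gx) (hD : ∀ x t, 0 < t → HasDerivAt (fun x => G x t) (Gx x t) x)
    {ux : ℝ → ℝ → ℝ} (hux : ∀ x t, 0 < t → HasDerivAt (fun x => Psi d c u0 F G x t) (ux x t) x) :
    Hol α ((1 + α) / 2) ux := by
  rw [← sh_sh c ux]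
  refine (Psi0_dx_hol hd hα hα1 hu hB (cF.sh c) (bF.sh c) (bG.sh c) (cx.sh c) (bx.sh c)
    (fun x t ht => sh_deriv c (fun x => hD x t ht) x) (u0 := u0) (ux := sh c ux) fun x t ht => ?_).sh _
  have := sh_deriv c (fun x => hux x t ht) x
  unfold Psi at this
  have e := sh_sh (-c) (Psi0 d u0 (sh c F) (sh c G))
  rw [neg_neg] at e
  rwa [e] at this

lemma Psi_full (hd : 0 < d) (hα : 0 < α) (hα1 : α < 1) (hu : Continuous u0) (hB : ∀ x, |u0 x| ≤ B)
    (cF : Cont F) (bF : Bd 0 F) (bG : Bd 0 G)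
    {Gx : ℝ → ℝ → ℝ} (cx : Cont Gx) (bx : Bd (1/2) Gx) (hD : ∀ x t, 0 < t → HasDerivAt (fun x => G x t) (Gx x t) x)
    (hh : Hol α ((1 + α) / 2) (fun x t => F x t + Gx x t)) :
    ∃ ut ux uxx, Cont ut ∧ Cont ux ∧ Cont uxx ∧ ∀ x t, 0 < t →
      HasDerivAt (fun x => Psi d c u0 F G x t) (ux x t) x ∧ HasDerivAt (fun x => ux x t) (uxx x t) x ∧
      HasDerivAt (fun t => Psi d c u0 F G x t) (ut x t) t ∧ ut x t = d * uxx x t + c * ux x t + F x t + Gx x t := by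
  obtain ⟨ut, ux, uxx, h1, h2, h3, h4⟩ := Psi0_full hd hα hα1 hu hB (cF.sh c) (bF.sh c) (bG.sh c) (cx.sh c) (bx.sh c)
    (fun x t ht => sh_deriv c (fun x => hD x t ht) x) (hh.sh c)
  refine ⟨fun x t => c * sh (-c) ux x t + sh (-c) ut x t, sh (-c) ux, sh (-c) uxx, ?_, h2.sh _, h3.sh _, fun x t ht =>
    ⟨sh_deriv _ (fun x => (h4 x t ht).1) x, sh_deriv _ (fun x => (h4 x t ht).2.1) x,
      chain c (fun x t ht => (h4 x t ht).1) (fun x t ht => (h4 x t ht).2.2.1) h2 h1 x ht, ?_⟩⟩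
  · exact (ContinuousOn.mul continuousOn_const (h2.sh _)).add (h1.sh _)
  · simp only [sh]
    rw [(h4 (x - -c * t) t ht).2.2.2]
    simp only [sh]
    have : x - -c * t - c * t = x := by ring
    rw [this]; ring

lemma Duh_zero (d : ℝ) (k : ℕ) (h : ℝ → ℝ → ℝ) (x : ℝ) : Duh d k h x 0 = 0 := by simp [Duh]

lemma Psi_zero (hd : 0 < d) (x : ℝ) : Psi d c u0 F G x 0 = u0 x := by
  simp [Psi, sh, Psi0, Duh_zero, Hom_zero hd]

lemma Duh_cont0 (hd : 0 < d) {k : ℕ} (hk : k ≤ 1) {h : ℝ → ℝ → ℝ} (cF : Cont h) (bF : Bd 0 h) :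
    ContinuousOn (fun p : ℝ × ℝ => Duh d k h p.1 p.2) {p | 0 ≤ p.2} := by
  have a := Adm.of_bd hd hk le_rfl one_pos cF bF
  rintro ⟨x0, t0⟩ ht0
  rcases (show 0 ≤ t0 from ht0).lt_or_eq with h | h
  · exact ((Duh_cont a).continuousAt (isOpen_pos2.mem_nhds h)).continuousWithinAt
  · subst h
    obtain ⟨A, hA, hb⟩ := Duh_bound a 1 one_pos
    rw [ContinuousWithinAt, Duh_zero]
    have hk' : (k:ℝ) ≤ 1 := by exact_mod_cast hk
    have hp : 0 < 1 - ((k:ℝ) - 0) / 2 - 0 := by linarith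
    refine squeeze_zero_norm' (a := fun p : ℝ × ℝ => A * p.2 ^ (1 - ((k:ℝ) - 0) / 2 - 0)) ?_ ?_
    · have h1 : ∀ᶠ p : ℝ × ℝ in 𝓝[{p | 0 ≤ p.2}] (x0, 0), p.2 < 1 :=
        nhdsWithin_le_nhds ((isOpen_lt continuous_snd continuous_const).mem_nhds (by simp))
      filter_upwards [self_mem_nhdsWithin, h1] with p hp0 hp1
      rcases (show 0 ≤ p.2 from hp0).lt_or_eq with h | h
      · have := hb p.1 p.2 h hp1.le
        rwa [neg_neg] at this
      · rw [← h, Duh_zero, zero_rpow hp.ne']; simp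
    · have : Continuous (fun p : ℝ × ℝ => A * p.2 ^ (1 - ((k:ℝ) - 0) / 2 - 0)) :=
        continuous_const.mul (continuous_snd.rpow_const fun _ => Or.inr hp.le)
      have h2 := this.tendsto (x0, 0)
      simp only [zero_rpow hp.ne', mul_zero] at h2
      exact h2.mono_left nhdsWithin_le_nhds

lemma Psi_cont0 (hd : 0 < d) (hu : Continuous u0) (hB : ∀ x, |u0 x| ≤ B) (cF : Cont F) (bF : Bd 0 F) (cG : Cont G) (bG : Bd 0 G) :
    ContinuousOn (fun p : ℝ × ℝ => Psi d c u0 F G p.1 p.2) {p | 0 ≤ p.2} := by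
  have : ContinuousOn (fun p : ℝ × ℝ => Psi0 d u0 (sh c F) (sh c G) p.1 p.2) {p | 0 ≤ p.2} :=
    ((Hom_cont0 hd hu hB).continuousOn.add (Duh_cont0 hd (by norm_num) (cF.sh c) (bF.sh c))).add
      (Duh_cont0 hd le_rfl (cG.sh c) (bG.sh c))
  exact this.comp (f := fun p : ℝ × ℝ => (p.1 - -c * p.2, p.2)) (by fun_prop) (fun p hp => hp)

end

end HK

namespace HK
open Real Filter Topology

lemma gauss_aff {β q : ℝ} (hβ : 0 < β) (hq : q ≠ 0) (p : ℝ) :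
    Integrable (fun z : ℝ => exp (-β * (p + q * z) ^ 2)) ∧ ∫ z, exp (-β * (p + q * z) ^ 2) = √(π / β) / |q| := by
  have i1 := integrable_exp_neg_mul_sq hβ
  have i2 : Integrable (fun y : ℝ => exp (-β * (p + y) ^ 2)) := i1.comp_add_left p
  refine ⟨i2.comp_mul_left' hq, ?_⟩
  rw [Measure.integral_comp_mul_left (fun y => exp (-β * (p + y) ^ 2)) q,
    integral_add_left_eq_self (fun y => exp (-β * y ^ 2)) p, integral_gaussian, smul_eq_mul, abs_inv, inv_mul_eq_div]

lemma sq_id {a z q n N : ℝ} (hn : 0 < n) (hN : N = n + q ^ 2) :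
    (a + q * z) ^ 2 / n + z ^ 2 = a ^ 2 / N + (a * q + N * z) ^ 2 / (n * N) := by
  have : 0 < N := by rw [hN]; positivity
  rw [div_add' _ _ _ hn.ne', div_add_div _ _ this.ne' (by positivity), div_eq_div_iff hn.ne' (by positivity)]
  subst hN; ring

def ga (M n b : ℝ) : ℝ := exp (-(b ^ 2 / (M * n)))

lemma ga_pos (M n b : ℝ) : 0 < ga M n b := exp_pos _

lemma pw1 {M a z q n N : ℝ} (hM : 0 < M) (hn : 0 < n) (hN : N = n + q ^ 2) :
    ga M n (a + q * z) * exp (-(2 / M) * z ^ 2) ≤ ga M N a * exp (-(1 / (2 * M * n * N)) * (a * q + N * z) ^ 2) := by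
  have hN0 : 0 < N := by rw [hN]; positivity
  rw [ga, ga, ← exp_add, ← exp_add, exp_le_exp]
  have h := sq_id (a := a) (z := z) hn hN
  have e1 : (a + q * z) ^ 2 / (M * n) = M⁻¹ * ((a + q * z) ^ 2 / n) := by field_simp
  have e2 : a ^ 2 / (M * N) = M⁻¹ * (a ^ 2 / N) := by field_simp
  have e3 : (1 / (2 * M * n * N)) * (a * q + N * z) ^ 2 = M⁻¹ * ((a * q + N * z) ^ 2 / (n * N) / 2) := by field_simp
  have e4 : (2 / M) * z ^ 2 = M⁻¹ * (2 * z ^ 2) := by field_simp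
  rw [neg_mul, neg_mul, e1, e2, e3, e4]
  have hY : 0 ≤ (a * q + N * z) ^ 2 / (n * N) := by positivity
  have : M⁻¹ * (a ^ 2 / N + (a * q + N * z) ^ 2 / (n * N) / 2) ≤ M⁻¹ * ((a + q * z) ^ 2 / n + 2 * z ^ 2) := by
    refine mul_le_mul_of_nonneg_left ?_ (by positivity)
    linarith [sq_nonneg z]
  linarith

lemma sq3 (x y z : ℝ) : (x - y + z) ^ 2 ≤ 3 * (x ^ 2 + y ^ 2 + z ^ 2) := by
  nlinarith [sq_nonneg (x + y), sq_nonneg (x - z), sq_nonneg (y + z)]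

lemma case1 {b z q s κ N A n : ℝ} (hs : 0 ≤ s) (hn' : n = 1 + s) (hN : N = n + q ^ 2) (hq : 0 < q)
    (hb : b = (A - n * z) / q) (hc : N / 4 ≤ q ^ 2) :
    κ ^ 2 * (s - 1) / 24 ≤ A ^ 2 / (n * N) / 2 + z ^ 2 + (b + κ * s) ^ 2 / n := by
  have hn : 0 < n := by linarith
  have hN0 : 0 < N := by rw [hN]; positivity
  have k1 : (κ * s) ^ 2 ≤ 3 * ((b + κ * s) ^ 2 + A ^ 2 / q ^ 2 + n ^ 2 * z ^ 2 / q ^ 2) := by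
    have e : A ^ 2 / q ^ 2 = (A / q) ^ 2 := by rw [div_pow]
    have e' : n ^ 2 * z ^ 2 / q ^ 2 = (n * z / q) ^ 2 := by rw [div_pow, mul_pow]
    rw [e, e']
    have : κ * s = (b + κ * s) - A / q + n * z / q := by
      have h3 : b = A / q - n * z / q := by rw [hb]; ring
      linarith
    have h4 := sq3 (b + κ * s) (A / q) (n * z / q)
    rwa [← this] at h4
  have k2 : A ^ 2 / q ^ 2 ≤ 4 * (A ^ 2 / (n * N) * n) := by
    have : 4 * (A ^ 2 / (n * N) * n) = A ^ 2 / (N / 4) := by field_simp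
    rw [this]
    gcongr
  have k3 : n ^ 2 * z ^ 2 / q ^ 2 ≤ 4 * (z ^ 2 * n) := by
    rw [div_le_iff₀ (by positivity)]
    have : n ≤ 4 * q ^ 2 := by linarith [sq_nonneg q]
    calc n ^ 2 * z ^ 2 = (n * z ^ 2) * n := by ring
      _ ≤ (n * z ^ 2) * (4 * q ^ 2) := by gcongr
      _ = _ := by ring
  have k4 : (b + κ * s) ^ 2 = (b + κ * s) ^ 2 / n * n := by field_simp
  have k5 : (s - 1) * n ≤ s ^ 2 := by rw [hn']; nlinarith
  have k7 : κ ^ 2 * ((s - 1) * n) ≤ κ ^ 2 * s ^ 2 := by gcongr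
  have k8 : 0 ≤ z ^ 2 * n := by positivity
  have k9 : 0 ≤ (b + κ * s) ^ 2 / n * n := by positivity
  have k6 : (κ ^ 2 * (s - 1) / 24) * n ≤ (A ^ 2 / (n * N) / 2 + z ^ 2 + (b + κ * s) ^ 2 / n) * n := by
    rw [mul_pow] at k1
    have e1 : (κ ^ 2 * (s - 1) / 24) * n = κ ^ 2 * ((s - 1) * n) / 24 := by ring
    rw [e1, add_mul, add_mul, div_mul_eq_mul_div _ 2]
    linarith
  exact le_of_mul_le_mul_right k6 hn

lemma case2 {a z q s κ N A n : ℝ} (hn : 0 < n) (hN : N = n + q ^ 2) (hc : q ^ 2 ≤ N / 4) :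
    (a + κ * s) ^ 2 / (2 * N) ≤ A ^ 2 / (n * N) / 2 + z ^ 2 + (a + q * z + κ * s) ^ 2 / n := by
  have hN0 : 0 < N := by rw [hN]; positivity
  have hY : 0 ≤ A ^ 2 / (n * N) := by positivity
  have k1 : (a + κ * s) ^ 2 / 2 - q ^ 2 * z ^ 2 ≤ (a + q * z + κ * s) ^ 2 := by
    nlinarith [sq_nonneg (a + κ * s + 2 * q * z)]
  have k2 : (a + κ * s) ^ 2 / (2 * N) ≤ (a + κ * s) ^ 2 / 2 / n := by
    rw [div_div]
    refine div_le_div_of_nonneg_left (sq_nonneg _) (by positivity) (by linarith [sq_nonneg q])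
  have k3 : q ^ 2 * z ^ 2 / n ≤ z ^ 2 := by
    rw [div_le_iff₀ hn, mul_comm]
    have : q ^ 2 ≤ n := by linarith
    gcongr
  have k4 := div_le_div_of_nonneg_right k1 hn.le
  rw [sub_div] at k4
  linarith

lemma pw2 {M a z q s κ N : ℝ} (hM : 0 < M) (hs : 0 ≤ s) (hN : N = 1 + s + q ^ 2) (hq : 0 < q) :
    (ga M (1 + s) (a + q * z) * ga M (1 + s) (a + q * z + κ * s)) * exp (-(2 / M) * z ^ 2) * (√(1 + s))⁻¹ ≤
      (exp (-(κ ^ 2 / (24 * M)) * (s - 1)) + 2 * (√N)⁻¹ * exp (-(1 / (2 * M * N)) * (a + κ * s) ^ 2)) *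
      (ga M N a * exp (-(1 / (2 * M * (1 + s) * N)) * (a * q + N * z) ^ 2)) := by
  set n := 1 + s with hn'
  have hn : 0 < n := by linarith
  have hN0 : 0 < N := by rw [hN]; positivity
  have h := sq_id (a := a) (z := z) hn hN
  set A := a * q + N * z with hA
  have hY : 0 ≤ A ^ 2 / (n * N) := by positivity
  have e1 : (a + q * z) ^ 2 / (M * n) = M⁻¹ * ((a + q * z) ^ 2 / n) := by field_simp
  have e1' : (a + q * z + κ * s) ^ 2 / (M * n) = M⁻¹ * ((a + q * z + κ * s) ^ 2 / n) := by field_simp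
  have e2 : a ^ 2 / (M * N) = M⁻¹ * (a ^ 2 / N) := by field_simp
  have e3 : (1 / (2 * M * n * N)) * A ^ 2 = M⁻¹ * (A ^ 2 / (n * N) / 2) := by field_simp
  have e4 : (2 / M) * z ^ 2 = M⁻¹ * (2 * z ^ 2) := by field_simp
  have hM' : 0 < M⁻¹ := by positivity
  have red : ∀ X c : ℝ, 0 ≤ c → (√n)⁻¹ ≤ c → X ≤ A ^ 2 / (n * N) / 2 + z ^ 2 + (a + q * z + κ * s) ^ 2 / n →
      (ga M n (a + q * z) * ga M n (a + q * z + κ * s)) * exp (-(2 / M) * z ^ 2) * (√n)⁻¹ ≤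
      (c * exp (-(M⁻¹ * X))) * (ga M N a * exp (-(1 / (2 * M * n * N)) * A ^ 2)) := by
    intro X c hc hnc hX
    have : (ga M n (a + q * z) * ga M n (a + q * z + κ * s)) * exp (-(2 / M) * z ^ 2) ≤
        exp (-(M⁻¹ * X)) * (ga M N a * exp (-(1 / (2 * M * n * N)) * A ^ 2)) := by
      rw [ga, ga, ga, ← exp_add, ← exp_add, ← exp_add, ← exp_add, exp_le_exp, neg_mul, neg_mul, e1, e1', e2, e3, e4]
      have := mul_le_mul_of_nonneg_left hX hM'.le
      have h' : M⁻¹ * ((a + q * z) ^ 2 / n + z ^ 2) = M⁻¹ * (a ^ 2 / N + A ^ 2 / (n * N)) := by rw [h]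
      generalize (a + q * z) ^ 2 / n = Z1 at *
      generalize (a + q * z + κ * s) ^ 2 / n = Z2 at *
      generalize A ^ 2 / (n * N) = Z3 at *
      generalize a ^ 2 / N = Z4 at *
      linear_combination this - h'
    calc _ ≤ (exp (-(M⁻¹ * X)) * (ga M N a * exp (-(1 / (2 * M * n * N)) * A ^ 2))) * c := by
          have := ga_pos M N a
          gcongr
      _ = _ := by ring
  have hn1 : (√n)⁻¹ ≤ 1 := inv_le_one_of_one_le₀ (one_le_sqrt.2 (by linarith))
  rcases le_total (N / 4) (q ^ 2) with hc | hc
  · refine (red (κ ^ 2 * (s - 1) / 24) 1 zero_le_one hn1 ?_).trans ?_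
    · refine case1 hs rfl hN hq ?_ hc
      rw [eq_div_iff hq.ne', hA, hN]; ring
    · have := ga_pos M N a
      have e5 : -(M⁻¹ * (κ ^ 2 * (s - 1) / 24)) = -(κ ^ 2 / (24 * M)) * (s - 1) := by field_simp
      rw [one_mul, e5]
      gcongr
      simp only [le_add_iff_nonneg_right]; positivity
  · have hnN : N ≤ 4 * n := by nlinarith
    refine (red ((a + κ * s) ^ 2 / (2 * N)) (2 * (√N)⁻¹) (by positivity) ?_ ?_).trans ?_
    · have : √N ≤ 2 * √n := by
        rw [show (2:ℝ) = √4 by rw [show (4:ℝ) = 2 ^ 2 by norm_num]; simp, ← sqrt_mul (by norm_num)]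
        exact sqrt_le_sqrt hnN
      have h1 : 0 < √N := by positivity
      have h2 : 0 < √n := by positivity
      rw [inv_le_iff_one_le_mul₀ h2, mul_assoc, mul_comm, mul_assoc]
      rw [inv_mul_eq_div, le_div_iff₀ h1]
      linarith
    · exact case2 hn hN hc
    · have := ga_pos M N a
      have e5 : -(M⁻¹ * ((a + κ * s) ^ 2 / (2 * N))) = -(1 / (2 * M * N)) * (a + κ * s) ^ 2 := by field_simp
      rw [e5]
      gcongr
      simp only [le_add_iff_nonneg_left]; positivity

lemma Q_gauss {d : ℝ} (hd : 0 < d) (k : ℕ) : ∃ C, 0 < C ∧ ∀ M, 16 * d ≤ M → ∀ (w : ℝ → ℝ) (a q n N D : ℝ),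
    0 < n → N = n + q ^ 2 → 0 ≤ D →
    (∀ z, |w (a + q * z)| * exp (-(2 / M) * z ^ 2) ≤ D * (ga M N a * exp (-(1 / (2 * M * n * N)) * (a * q + N * z) ^ 2))) →
    |Q (ker d k) w q a| ≤ C * √(2 * π * M) * D * (√n / √N) * ga M N a := by
  obtain ⟨C, hC, hk⟩ := ker_bound hd k
  refine ⟨C, hC, fun M hM w a q n N D hn hN hD hw => ?_⟩
  have hM0 : 0 < M := by linarith
  have hN0 : 0 < N := by rw [hN]; positivity
  obtain ⟨i, e⟩ := gauss_aff (β := 1 / (2 * M * n * N)) (q := N) (by positivity) hN0.ne' (a * q)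
  rw [abs_of_pos hN0] at e
  have : |Q (ker d k) w q a| ≤ ∫ z, C * D * ga M N a * exp (-(1 / (2 * M * n * N)) * (a * q + N * z) ^ 2) := by
    rw [Q, ← Real.norm_eq_abs]
    refine norm_integral_le_of_norm_le (i.const_mul _) (ae_of_all _ fun z => ?_)
    rw [norm_mul, Real.norm_eq_abs, Real.norm_eq_abs]
    calc _ ≤ |w (a + q * z)| * (C * exp (-(2 / M) * z ^ 2)) := by
          refine mul_le_mul_of_nonneg_left ((hk z).trans ?_) (abs_nonneg _)
          refine mul_le_mul_of_nonneg_left (exp_le_exp.2 ?_) hC.le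
          rw [neg_mul, neg_mul, neg_le_neg_iff]
          refine mul_le_mul_of_nonneg_right ?_ (sq_nonneg z)
          rw [div_le_div_iff₀ hM0 (by positivity)]
          linarith
      _ = C * (|w (a + q * z)| * exp (-(2 / M) * z ^ 2)) := by ring
      _ ≤ C * (D * (ga M N a * exp (-(1 / (2 * M * n * N)) * (a * q + N * z) ^ 2))) := by
          exact mul_le_mul_of_nonneg_left (hw z) hC.le
      _ = _ := by ring
  rw [integral_const_mul, e] at this
  refine this.trans (le_of_eq ?_)
  have e2 : √(π / (1 / (2 * M * n * N))) = √(2 * π * M) * √n * √N := by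
    rw [← sqrt_mul (by positivity), ← sqrt_mul (by positivity)]
    congr 1; field_simp
  rw [e2]
  have e3 : √(2 * π * M) * √n * √N / N = √(2 * π * M) * (√n / √N) := by
    have h1 : 0 < √N := by positivity
    rw [mul_assoc, mul_div_assoc]
    congr 1
    rw [div_eq_div_iff hN0.ne' h1.ne', mul_assoc, mul_self_sqrt hN0.le]
  rw [e3]; ring

end HK

namespace HK
open Real Filter Topology

lemma Duh_le {d : ℝ} {k : ℕ} {h : ℝ → ℝ → ℝ} {x t : ℝ} (ht : 0 < t) {β : ℝ → ℝ} (hβ : IntegrableOn β (Ioo 0 t))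
    (hb : ∀ s ∈ Ioo 0 t, ((√(t - s)) ^ k)⁻¹ * |Q (ker d k) (fun y => h y s) (√(t - s)) x| ≤ β s) :
    |Duh d k h x t| ≤ ∫ s in Ioo 0 t, β s := by
  rw [Duh_eq d k h x ht, ← Real.norm_eq_abs]
  refine norm_integral_le_of_norm_le hβ ?_
  filter_upwards [self_mem_ae_restrict measurableSet_Ioo] with s hs
  rw [Real.norm_eq_abs, abs_mul, abs_of_nonneg (a := ((√(t - s)) ^ k)⁻¹) (by positivity)]
  exact hb s hs

lemma H_est {d M : ℝ} (hd : 0 < d) (hM : 16 * d ≤ M) : ∃ K, 0 < K ∧ ∀ (u0 : ℝ → ℝ) (δ : ℝ),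
    (∀ b, |u0 b| ≤ δ * ga M 1 b) → ∀ a t, 0 ≤ t → |Hom d 0 u0 a t| ≤ K * δ * ((√(1 + t))⁻¹ * ga M (1 + t) a) := by
  obtain ⟨C, hC, hQ⟩ := Q_gauss hd 0
  have hM0 : 0 < M := by linarith
  refine ⟨C * √(2 * π * M), by positivity, fun u0 δ hu a t ht => ?_⟩
  have hδ : 0 ≤ δ := by
    have := (abs_nonneg _).trans (hu 0)
    exact nonneg_of_mul_nonneg_left this (ga_pos _ _ _)
  have := hQ M hM u0 a (√t) 1 (1 + t) δ one_pos (by rw [sq_sqrt ht]) hδ fun z => by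
    have h1 := pw1 (a := a) (z := z) (q := √t) (N := 1 + t) hM0 one_pos (by rw [sq_sqrt ht])
    calc _ ≤ δ * ga M 1 (a + √t * z) * exp (-(2 / M) * z ^ 2) := by gcongr; exact hu _
      _ = δ * (ga M 1 (a + √t * z) * exp (-(2 / M) * z ^ 2)) := by ring
      _ ≤ _ := by gcongr
  simp only [Hom, pow_zero, inv_one, one_mul]
  refine this.trans (le_of_eq ?_)
  rw [sqrt_one]; ring

lemma G_est {d M : ℝ} (hd : 0 < d) (hM : 16 * d ≤ M) : ∃ K, 0 < K ∧ ∀ (G : ℝ → ℝ → ℝ) (E : ℝ), 0 ≤ E →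
    (∀ b s, 0 < s → |G b s| ≤ E * (1 + s)⁻¹ * ga M (1 + s) b) → ∀ a t, 0 < t →
    |Duh d 1 G a t| ≤ K * E * ((√(1 + t))⁻¹ * ga M (1 + t) a) := by
  obtain ⟨C, hC, hQ⟩ := Q_gauss hd 1
  have hM0 : 0 < M := by linarith
  have hBe := Be_nonneg (1/2) (1/2)
  refine ⟨C * √(2 * π * M) * (Be (1/2) (1/2) + 1), by positivity, fun G E hE hG a t ht => ?_⟩
  have hga := ga_pos M (1 + t) a
  set X := C * √(2 * π * M) * E * ((√(1 + t))⁻¹ * ga M (1 + t) a) with hX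
  have hX0 : 0 ≤ X := by positivity
  have key : |∫ r in Ioo (0:ℝ) 1, DI d 1 G a t r| ≤
      ∫ r in Ioo (0:ℝ) 1, (X * t⁻¹) * (r ^ (-(1/2:ℝ)) * (1 - r) ^ (-(1/2:ℝ))) := by
    rw [← Real.norm_eq_abs]
    refine norm_integral_le_of_norm_le
      ((beta_integrable (by norm_num) (by norm_num) (by norm_num) (by norm_num)).const_mul _) ?_
    filter_upwards [self_mem_ae_restrict measurableSet_Ioo] with r hr
    have h1 : 0 < 1 - r := by linarith [hr.2]
    have h0 : 0 < r := hr.1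
    have hs : 0 < t * (1 - r) := by positivity
    have hτ : 0 < t * r := by positivity
    set s := t * (1 - r) with hs'
    have hN : 1 + t = 1 + s + (√(t * r)) ^ 2 := by rw [sq_sqrt hτ.le, hs']; ring
    have := hQ M hM (fun y => G y s) a (√(t * r)) (1 + s) (1 + t) (E * (1 + s)⁻¹) (by positivity) hN (by positivity) fun z => by
      have h1 := pw1 (a := a) (z := z) (q := √(t * r)) (N := 1 + t) (n := 1 + s) hM0 (by positivity) hN
      calc _ ≤ E * (1 + s)⁻¹ * ga M (1 + s) (a + √(t * r) * z) * exp (-(2 / M) * z ^ 2) := by gcongr; exact hG _ _ hs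
        _ = E * (1 + s)⁻¹ * (ga M (1 + s) (a + √(t * r) * z) * exp (-(2 / M) * z ^ 2)) := by ring
        _ ≤ _ := by gcongr
    rw [DI, Real.norm_eq_abs, abs_mul, abs_of_pos (by positivity), pow_one]
    have e1 : (1 + s)⁻¹ * √(1 + s) = (√(1 + s))⁻¹ := by
      have h3 : 0 < √(1 + s) := by positivity
      nth_rw 1 [← mul_self_sqrt (show 0 ≤ 1 + s by positivity)]
      field_simp
    have e2 : (√(1 + s))⁻¹ ≤ (√s)⁻¹ := by
      have : 0 < √s := by positivity
      gcongr
      linarith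
    have e3 : (√(t * r))⁻¹ * (√s)⁻¹ = t⁻¹ * (r ^ (-(1/2:ℝ)) * (1 - r) ^ (-(1/2:ℝ))) := by
      rw [rpow_neg h0.le, rpow_neg h1.le, ← sqrt_eq_rpow, ← sqrt_eq_rpow, hs', sqrt_mul ht.le, sqrt_mul ht.le]
      nth_rw 3 [← mul_self_sqrt ht.le]
      rw [mul_inv, mul_inv, mul_inv]; ring
    calc _ ≤ (√(t * r))⁻¹ * (C * √(2 * π * M) * (E * (1 + s)⁻¹) * (√(1 + s) / √(1 + t)) * ga M (1 + t) a) := by gcongr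
      _ = X * ((√(t * r))⁻¹ * ((1 + s)⁻¹ * √(1 + s))) := by rw [hX]; ring
      _ ≤ X * ((√(t * r))⁻¹ * (√s)⁻¹) := by rw [e1]; gcongr
      _ = _ := by rw [e3]; ring
  rw [integral_const_mul] at key
  rw [Duh, abs_mul, abs_of_pos ht]
  calc _ ≤ t * (X * t⁻¹ * Be (1/2) (1/2)) := by gcongr; exact key
    _ = X * Be (1/2) (1/2) := by field_simp
    _ ≤ X * (Be (1/2) (1/2) + 1) := by gcongr; linarith
    _ = _ := by rw [hX]; ring

lemma F_est {d M κ : ℝ} (hd : 0 < d) (hM : 16 * d ≤ M) (hκ : κ ≠ 0) : ∃ K, 0 < K ∧ ∀ (F : ℝ → ℝ → ℝ) (E : ℝ), 0 ≤ E →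
    (∀ b s, 0 < s → |F b s| ≤ E * (((1 + s) ^ 2)⁻¹ * ga M (1 + s) b +
      (1 + s)⁻¹ * (ga M (1 + s) b * ga M (1 + s) (b + κ * s)))) → ∀ a t, 0 < t →
    |Duh d 0 F a t| ≤ K * E * ((√(1 + t))⁻¹ * ga M (1 + t) a) := by
  obtain ⟨C, hC, hQ⟩ := Q_gauss hd 0
  have hM0 : 0 < M := by linarith
  set η := κ ^ 2 / (24 * M) with hη
  have hη0 : 0 < η := by positivity
  have i1 : IntegrableOn (fun s : ℝ => (s + 1) ^ (-(3/2:ℝ))) (Ioi 0) :=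
    integrableOn_add_rpow_Ioi_of_lt (by norm_num) (by norm_num)
  have i2 : IntegrableOn (fun s : ℝ => exp (-η * (s - 1))) (Ioi 0) := by
    have this : IntegrableOn (fun s : ℝ => exp η * exp (-η * s)) (Ioi 0) :=
      (integrableOn_exp_mul_Ioi (a := -η) (by linarith) 0).const_mul (exp η)
    refine this.congr_fun (fun s _ => ?_) measurableSet_Ioi
    simp only [← exp_add]; congr 1; ring
  set J1 := ∫ s in Ioi (0:ℝ), (s + 1) ^ (-(3/2:ℝ)) with hJ1
  set J2 := ∫ s in Ioi (0:ℝ), exp (-η * (s - 1)) with hJ2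
  have hJ1' : 0 ≤ J1 := setIntegral_nonneg measurableSet_Ioi fun s hs => by
    have : (0:ℝ) < s := hs
    positivity
  have hJ2' : 0 ≤ J2 := setIntegral_nonneg measurableSet_Ioi fun s hs => by positivity
  have hκ' : 0 < |κ| := abs_pos.2 hκ
  refine ⟨C * √(2 * π * M) * (J1 + (J2 + 2 * √(2 * π * M) / |κ|)), by positivity, fun F E hE hF a t ht => ?_⟩
  have hga := ga_pos M (1 + t) a
  set X := C * √(2 * π * M) * E * ((√(1 + t))⁻¹ * ga M (1 + t) a) with hX
  have hX0 : 0 ≤ X := by positivity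
  obtain ⟨i3, I3⟩ := gauss_aff (β := 1 / (2 * M * (1 + t))) (by positivity) hκ a
  set T3 : ℝ → ℝ := fun s => 2 * (√(1 + t))⁻¹ * exp (-(1 / (2 * M * (1 + t))) * (a + κ * s) ^ 2) with hT3
  have i3' : Integrable T3 := i3.const_mul _
  have I3' : ∫ s, T3 s = 2 * √(2 * π * M) / |κ| := by
    rw [hT3, integral_const_mul, I3]
    have : √(π / (1 / (2 * M * (1 + t)))) = √(2 * π * M) * √(1 + t) := by
      rw [← sqrt_mul (by positivity)]; congr 1; field_simp
    rw [this]
    have h3 : 0 < √(1 + t) := by positivity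
    field_simp
  have hsub : Ioo 0 t ⊆ Ioi (0:ℝ) := fun s hs => hs.1
  have j1 := i1.mono_set hsub
  have j2 := i2.mono_set hsub
  have j3 : IntegrableOn T3 (Ioo 0 t) := i3'.integrableOn
  have j23 : IntegrableOn (fun s => exp (-η * (s - 1)) + T3 s) (Ioo 0 t) := j2.add j3
  have key := Duh_le (d := d) (k := 0) (h := F) (x := a) ht
    (β := fun s => X * ((s + 1) ^ (-(3/2:ℝ)) + (exp (-η * (s - 1)) + T3 s)))
    ((j1.add j23).const_mul X) ?_
  · rw [integral_const_mul, integral_add j1 j23, integral_add j2 j3] at key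
    refine key.trans ?_
    have b1 : ∫ s in Ioo 0 t, (s + 1) ^ (-(3/2:ℝ)) ≤ J1 := by
      refine setIntegral_mono_set i1 ?_ hsub.eventuallyLE
      filter_upwards [self_mem_ae_restrict measurableSet_Ioi] with s hs
      have : (0:ℝ) < s := hs
      simp only [Pi.zero_apply]; positivity
    have b2 : ∫ s in Ioo 0 t, exp (-η * (s - 1)) ≤ J2 := by
      refine setIntegral_mono_set i2 (ae_of_all _ fun s => ?_) hsub.eventuallyLE
      simp only [Pi.zero_apply]; positivity
    have b3 : ∫ s in Ioo 0 t, T3 s ≤ 2 * √(2 * π * M) / |κ| := by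
      rw [← I3']
      refine setIntegral_le_integral i3' (ae_of_all _ fun s => ?_)
      simp only [Pi.zero_apply, hT3]; positivity
    calc _ ≤ X * (J1 + (J2 + 2 * √(2 * π * M) / |κ|)) := by gcongr
      _ = _ := by rw [hX]; ring
  · intro s hs
    have hs0 : 0 < s := hs.1
    have hτ : 0 < t - s := by linarith [hs.2]
    rw [pow_zero, inv_one, one_mul]
    have hq0 : 0 < √(t - s) := by positivity
    have hN : 1 + t = 1 + s + (√(t - s)) ^ 2 := by rw [sq_sqrt hτ.le]; ring
    set n := 1 + s with hn
    have hn0 : 0 < n := by positivity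
    have hsn : 0 < √n := by positivity
    have hTn : 0 ≤ T3 s := by rw [hT3]; positivity
    have hinv : n⁻¹ = (√n)⁻¹ * (√n)⁻¹ := by rw [← mul_inv, mul_self_sqrt hn0.le]
    have := hQ M hM (fun y => F y s) a (√(t - s)) n (1 + t)
      (E * ((n ^ 2)⁻¹ + (√n)⁻¹ * (exp (-η * (s - 1)) + T3 s))) hn0 hN (by positivity) fun z => by
      have h1 := pw1 (a := a) (z := z) (q := √(t - s)) (N := 1 + t) (n := n) hM0 hn0 hN
      have h2 := pw2 (a := a) (z := z) (q := √(t - s)) (N := 1 + t) (s := s) (κ := κ) hM0 hs0.le hN hq0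
      rw [← hn, ← hη] at h2
      have h3 := mul_le_mul_of_nonneg_left h1 (show 0 ≤ (n ^ 2)⁻¹ by positivity)
      have h4 := mul_le_mul_of_nonneg_left h2 (show 0 ≤ (√n)⁻¹ by positivity)
      have h5 := mul_le_mul_of_nonneg_left (add_le_add h3 h4) hE
      refine (mul_le_mul_of_nonneg_right (hF (a + √(t - s) * z) s hs0) (exp_pos _).le).trans ?_
      refine (le_of_eq ?_).trans (h5.trans (le_of_eq ?_))
      · rw [← hn, hinv]; ring
      · simp only [hT3]; ring
    refine this.trans (le_of_eq ?_)
    have e1 : (n ^ 2)⁻¹ * √n = (s + 1) ^ (-(3/2:ℝ)) := by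
      rw [add_comm s 1, ← hn, sqrt_eq_rpow, ← rpow_natCast, ← rpow_neg hn0.le, ← rpow_add hn0]
      norm_num
    rw [← e1, hX]
    field_simp

lemma Psi0_est {d M κ : ℝ} (hd : 0 < d) (hM : 16 * d ≤ M) (hκ : κ ≠ 0) : ∃ K, 0 < K ∧ ∀ (u0 : ℝ → ℝ) (F G : ℝ → ℝ → ℝ) (δ E : ℝ), 0 ≤ E →
    (∀ b, |u0 b| ≤ δ * ga M 1 b) →
    (∀ b s, 0 < s → |F b s| ≤ E * (((1 + s) ^ 2)⁻¹ * ga M (1 + s) b +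
      (1 + s)⁻¹ * (ga M (1 + s) b * ga M (1 + s) (b + κ * s)))) →
    (∀ b s, 0 < s → |G b s| ≤ E * (1 + s)⁻¹ * ga M (1 + s) b) → ∀ a t, 0 < t →
    |Psi0 d u0 F G a t| ≤ K * (δ + E) * ((√(1 + t))⁻¹ * ga M (1 + t) a) := by
  obtain ⟨K0, h0, e0⟩ := H_est hd hM
  obtain ⟨K1, h1, e1⟩ := F_est hd hM hκ
  obtain ⟨K2, h2, e2⟩ := G_est hd hM
  refine ⟨K0 + K1 + K2, by positivity, fun u0 F G δ E hE hu hF hG a t ht => ?_⟩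
  have hδ : 0 ≤ δ := by
    have := (abs_nonneg _).trans (hu 0)
    exact nonneg_of_mul_nonneg_left this (ga_pos _ _ _)
  have hga := ga_pos M (1 + t) a
  set X := (√(1 + t))⁻¹ * ga M (1 + t) a
  have hX : 0 ≤ X := by positivity
  calc _ ≤ |Hom d 0 u0 a t| + |Duh d 0 F a t| + |Duh d 1 G a t| := abs_add_three _ _ _
    _ ≤ K0 * δ * X + K1 * E * X + K2 * E * X := add_le_add (add_le_add (e0 u0 δ hu a t ht.le) (e1 F E hE hF a t ht)) (e2 G E hE hG a t ht)
    _ ≤ _ := by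
      have : 0 ≤ (K0 * E + K1 * δ + K2 * δ) * X := by positivity
      nlinarith

end HK

namespace HK
open Real Filter Topology

def env (M c x t : ℝ) : ℝ := (√(1 + t))⁻¹ * ga M (1 + t) (x + c * t)

lemma ga_le_one {M n : ℝ} (hM : 0 ≤ M) (hn : 0 ≤ n) (b : ℝ) : ga M n b ≤ 1 := by
  rw [ga, exp_le_one_iff, neg_nonpos]; positivity

lemma env_nonneg (M c x t : ℝ) : 0 ≤ env M c x t := by
  have := ga_pos M (1 + t) (x + c * t)
  rw [env]; positivity

lemma sqrt_inv_le_one {t : ℝ} (ht : 0 ≤ t) : (√(1 + t))⁻¹ ≤ 1 := by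
  refine inv_le_one_of_one_le₀ ?_
  rw [one_le_sqrt]; linarith

lemma env_le {M c x t : ℝ} (hM : 0 ≤ M) (ht : 0 ≤ t) : env M c x t ≤ (√(1 + t))⁻¹ := by
  have h := ga_le_one hM (show 0 ≤ 1 + t by linarith) (x + c * t)
  rw [env]
  exact mul_le_of_le_one_right (by positivity) h

lemma env_le_one {M c x t : ℝ} (hM : 0 ≤ M) (ht : 0 ≤ t) : env M c x t ≤ 1 :=
  (env_le hM ht).trans (sqrt_inv_le_one ht)

lemma Psi_env {d c c' M : ℝ} (hd : 0 < d) (hM : 16 * d ≤ M) (hc : c ≠ c') : ∃ K, 0 < K ∧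
    ∀ (u0 : ℝ → ℝ) (F G u v : ℝ → ℝ → ℝ) (δ C e : ℝ), 0 ≤ C → 0 ≤ e → e ≤ 1 →
    (∀ b, |u0 b| ≤ δ * ga M 1 b) →
    (∀ x t, 0 < t → |u x t| ≤ e * env M c x t) → (∀ x t, 0 < t → |v x t| ≤ e * env M c' x t) →
    (∀ x t, 0 < t → |F x t| ≤ C * (|u x t| ^ 4 + |u x t| * |v x t|)) →
    (∀ x t, 0 < t → |G x t| ≤ C * (|u x t| ^ 2 + |u x t| * |v x t|)) →
    ∀ x t, 0 < t → |Psi d c u0 F G x t| ≤ K * (δ + 2 * C * e ^ 2) * env M c x t := by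
  obtain ⟨K, hK, est⟩ := Psi0_est (κ := c' - c) hd hM (sub_ne_zero.2 hc.symm)
  have hM0 : 0 ≤ M := by linarith
  refine ⟨K, hK, fun u0 F G u v δ C e hC he he1 hu0 hu hv hF hG x t ht => ?_⟩
  have key := est u0 (sh c F) (sh c G) δ (2 * C * e ^ 2) (by positivity) hu0 ?_ ?_ (x + c * t) t ht
  · simp only [Psi, sh]
    simpa [env] using key
  all_goals
    intro b s hs
    have e1 := hu (b - c * s) s hs
    have e2 := hv (b - c * s) s hs
    simp only [env] at e1 e2
    rw [sub_add_cancel] at e1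
    rw [show b - c * s + c' * s = b + (c' - c) * s by ring] at e2
    have g0 := ga_pos M (1 + s) b
    have g1 := ga_le_one hM0 (show 0 ≤ 1 + s by linarith) b
    have k0 := ga_pos M (1 + s) (b + (c' - c) * s)
    have k1 := ga_le_one hM0 (show 0 ≤ 1 + s by linarith) (b + (c' - c) * s)
    have hq : ((√(1 + s))⁻¹) ^ 2 = (1 + s)⁻¹ := by rw [inv_pow, sq_sqrt (by linarith)]
    have hi : 0 < (1 + s)⁻¹ := by positivity
    set p := ga M (1 + s) b
    set r := ga M (1 + s) (b + (c' - c) * s)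
    set q := (√(1 + s))⁻¹
    have hq0 : 0 ≤ q := by positivity
    set U := |u (b - c * s) s|
    set V := |v (b - c * s) s|
    have hUV : U * V ≤ e ^ 2 * ((1 + s)⁻¹ * (p * r)) := by
      calc U * V ≤ (e * (q * p)) * (e * (q * r)) := by gcongr
        _ = e ^ 2 * (q ^ 2 * (p * r)) := by ring
        _ = _ := by rw [hq]
    have hU2 : U ^ 2 ≤ e ^ 2 * ((1 + s)⁻¹ * p) := by
      calc U ^ 2 ≤ (e * (q * p)) ^ 2 := by gcongr
        _ = e ^ 2 * (q ^ 2 * (p * p)) := by ring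
        _ ≤ e ^ 2 * (q ^ 2 * (p * 1)) := by gcongr
        _ = _ := by rw [hq, mul_one]
  · refine (hF _ _ hs).trans ?_
    have hU4 : U ^ 4 ≤ e ^ 2 * (((1 + s) ^ 2)⁻¹ * p) := by
      calc U ^ 4 = U ^ 2 * U ^ 2 := by ring
        _ ≤ (e ^ 2 * ((1 + s)⁻¹ * p)) * (e ^ 2 * ((1 + s)⁻¹ * p)) := by gcongr
        _ = e ^ 2 * (((1 + s)⁻¹) ^ 2 * p) * (e ^ 2 * p) := by ring
        _ ≤ e ^ 2 * (((1 + s)⁻¹) ^ 2 * p) * (1 ^ 2 * 1) := by gcongr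
        _ = _ := by rw [inv_pow]; ring
    calc C * (U ^ 4 + U * V) ≤ C * (e ^ 2 * (((1 + s) ^ 2)⁻¹ * p) + e ^ 2 * ((1 + s)⁻¹ * (p * r))) := by gcongr
      _ = C * e ^ 2 * (((1 + s) ^ 2)⁻¹ * p + (1 + s)⁻¹ * (p * r)) := by ring
      _ ≤ 2 * C * e ^ 2 * (((1 + s) ^ 2)⁻¹ * p + (1 + s)⁻¹ * (p * r)) := by
        gcongr
        linarith
  · refine (hG _ _ hs).trans ?_
    calc C * (U ^ 2 + U * V) ≤ C * (e ^ 2 * ((1 + s)⁻¹ * p) + e ^ 2 * ((1 + s)⁻¹ * (p * r))) := by gcongr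
      _ ≤ C * (e ^ 2 * ((1 + s)⁻¹ * p) + e ^ 2 * ((1 + s)⁻¹ * (p * 1))) := by gcongr
      _ = _ := by ring

lemma Duh_contr {d : ℝ} (hd : 0 < d) {k : ℕ} (hk : k ≤ 1) {θ : ℝ} (hθ : 0 < θ) : ∃ L0, 0 < L0 ∧ ∀ L, L0 ≤ L →
    ∀ (h : ℝ → ℝ → ℝ) (N x t : ℝ), 0 < t → (∀ y s, 0 < s → |h y s| ≤ N * exp (L * s)) →
    |Duh d k h x t| ≤ θ * N * exp (L * t) := by
  set I := ∫ z, |ker d k z| with hI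
  have hI0 : 0 ≤ I := integral_nonneg fun _ => abs_nonneg _
  have hk' : (k:ℝ) ≤ 1 := by exact_mod_cast hk
  set p : ℝ := 1 - k / 2 with hp
  have hp0 : 0 < p := by linarith
  have hG := Gamma_pos_of_pos hp0
  have hlim : Tendsto (fun L : ℝ => I * ((1 / L) ^ p * Gamma p)) atTop (𝓝 0) := by
    have h1 : Tendsto (fun L : ℝ => (1 / L) ^ p) atTop (𝓝 0) := by
      have := (tendsto_rpow_neg_atTop hp0)
      refine this.congr' ?_
      filter_upwards [eventually_gt_atTop 0] with L hL
      rw [one_div, inv_rpow hL.le, rpow_neg hL.le]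
    simpa using (h1.mul_const (Gamma p)).const_mul I
  obtain ⟨L0, hL0⟩ := ((hlim.eventually_le_const hθ).and (eventually_gt_atTop 0)).exists_forall_of_atTop
  refine ⟨max L0 1, by positivity, fun L hL h N x t ht hb => ?_⟩
  obtain ⟨hLθ, hLpos⟩ := hL0 L ((le_max_left _ _).trans hL)
  have hN : 0 ≤ N := by
    have := (abs_nonneg _).trans (hb 0 1 one_pos)
    exact nonneg_of_mul_nonneg_left this (exp_pos _)
  set φ : ℝ → ℝ := fun τ => τ ^ (p - 1) * exp (-(L * τ)) with hφ
  have hint : ∫ τ in Ioi (0:ℝ), φ τ = (1 / L) ^ p * Gamma p := integral_rpow_mul_exp_neg_mul_Ioi hp0 hLpos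
  have hpos : 0 < (1 / L) ^ p * Gamma p := by positivity
  have hii : IntegrableOn φ (Ioi 0) := by
    by_contra hcon
    have := integral_undef hcon
    rw [hint] at this
    linarith
  have hsub : Ioo 0 t ⊆ Ioi (0:ℝ) := fun s hs => hs.1
  have hi := hii.mono_set hsub
  have hmp := Measure.measurePreserving_sub_left (volume : Measure ℝ) t
  have hemb : MeasurableEmbedding (fun s : ℝ => t - s) := (MeasurableEquiv.subLeft t).measurableEmbedding
  have hpre : (fun s : ℝ => t - s) ⁻¹' (Ioo 0 t) = Ioo 0 t := by
    rw [preimage_const_sub_Ioo]; simp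
  have hi' : IntegrableOn (fun s => φ (t - s)) (Ioo 0 t) := by
    have := (hmp.integrableOn_comp_preimage hemb (f := φ) (s := Ioo 0 t)).2 hi
    rwa [hpre] at this
  have hi'' : ∫ s in Ioo 0 t, φ (t - s) = ∫ s in Ioo 0 t, φ s := by
    have := hmp.setIntegral_preimage_emb hemb φ (Ioo 0 t)
    rwa [hpre] at this
  have hle : ∫ s in Ioo 0 t, φ s ≤ (1 / L) ^ p * Gamma p := by
    rw [← hint]
    refine setIntegral_mono_set hii ?_ hsub.eventuallyLE
    filter_upwards [self_mem_ae_restrict measurableSet_Ioi] with s hs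
    have : (0:ℝ) < s := hs
    simp only [Pi.zero_apply, hφ]; positivity
  have key := Duh_le (d := d) (k := k) (h := h) (x := x) ht (hi'.const_mul (I * N * exp (L * t))) ?_
  · rw [integral_const_mul, hi''] at key
    refine key.trans ?_
    calc _ ≤ I * N * exp (L * t) * ((1 / L) ^ p * Gamma p) := by gcongr
      _ = I * ((1 / L) ^ p * Gamma p) * (N * exp (L * t)) := by ring
      _ ≤ θ * (N * exp (L * t)) := by gcongr
      _ = _ := by ring
  · intro s hs
    have hτ : 0 < t - s := by linarith [hs.2]
    have hQ := Q_bound (ker_integrable hd k) (w := fun y => h y s) (fun y => hb y s hs.1) (√(t - s)) x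
    have e1 : ((√(t - s)) ^ k)⁻¹ = (t - s) ^ (p - 1) := by
      rw [hp, sqrt_eq_rpow, ← rpow_natCast, ← rpow_mul hτ.le, ← rpow_neg hτ.le]
      congr 1; ring
    have e2 : exp (L * t) * exp (-(L * (t - s))) = exp (L * s) := by rw [← exp_add]; congr 1; ring
    calc _ ≤ ((√(t - s)) ^ k)⁻¹ * (N * exp (L * s) * I) := by gcongr
      _ = _ := by rw [e1, ← e2, hφ]; ring

lemma Psi_contr {d c : ℝ} (hd : 0 < d) {θ : ℝ} (hθ : 0 < θ) : ∃ L0, 0 < L0 ∧ ∀ L, L0 ≤ L →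
    ∀ (u0 : ℝ → ℝ) (F G F' G' : ℝ → ℝ → ℝ) (N : ℝ), Cont F → Bd 0 F → Cont G → Bd 0 G →
      Cont F' → Bd 0 F' → Cont G' → Bd 0 G' →
      (∀ y s, 0 < s → |F y s - F' y s| ≤ N * exp (L * s)) →
      (∀ y s, 0 < s → |G y s - G' y s| ≤ N * exp (L * s)) → ∀ x t, 0 < t →
      |Psi d c u0 F G x t - Psi d c u0 F' G' x t| ≤ θ * N * exp (L * t) := by
  obtain ⟨L0, hL0, e0⟩ := Duh_contr hd (k := 0) (by norm_num) (half_pos hθ)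
  obtain ⟨L1, hL1, e1⟩ := Duh_contr hd (k := 1) le_rfl (half_pos hθ)
  refine ⟨max L0 L1, by positivity, fun L hL u0 F G F' G' N cF bF cG bG cF' bF' cG' bG' hF hG x t ht => ?_⟩
  have a0 := Duh_sub (Adm.of_bd hd (k := 0) (by norm_num) le_rfl one_pos (cF.sh c) (bF.sh c))
    (Adm.of_bd hd (k := 0) (by norm_num) le_rfl one_pos (cF'.sh c) (bF'.sh c)) (x - -c * t) ht
  have a1 := Duh_sub (Adm.of_bd hd (k := 1) (by norm_num) le_rfl one_pos (cG.sh c) (bG.sh c))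
    (Adm.of_bd hd (k := 1) (by norm_num) le_rfl one_pos (cG'.sh c) (bG'.sh c)) (x - -c * t) ht
  have b0 := e0 L ((le_max_left _ _).trans hL) _ N (x - -c * t) t ht
    (fun y s hs => show |sh c F y s - sh c F' y s| ≤ _ from hF _ s hs)
  have b1 := e1 L ((le_max_right _ _).trans hL) _ N (x - -c * t) t ht
    (fun y s hs => show |sh c G y s - sh c G' y s| ≤ _ from hG _ s hs)
  rw [← a0] at b0
  rw [← a1] at b1
  have : Psi d c u0 F G x t - Psi d c u0 F' G' x t =
      (Duh d 0 (sh c F) (x - -c * t) t - Duh d 0 (sh c F') (x - -c * t) t) +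
      (Duh d 1 (sh c G) (x - -c * t) t - Duh d 1 (sh c G') (x - -c * t) t) := by
    rw [Psi, Psi, sh, sh, Psi0, Psi0]; ring
  rw [this]
  refine (abs_add_le _ _).trans ((add_le_add b0 b1).trans (le_of_eq ?_))
  ring

def Sc {ι : Type} (E : ι → ℝ → ℝ → ℝ) (z : ι → ℝ → ℝ → ℝ) : Prop :=
  (∀ i, Cont (z i)) ∧ ∀ i x t, 0 < t → |z i x t| ≤ E i x t

lemma picard {ι : Type} {E : ι → ℝ → ℝ → ℝ} (hE0 : ∀ i x t, 0 < t → 0 ≤ E i x t) (hE1 : ∀ i x t, 0 < t → E i x t ≤ 1)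
    {Φ : (ι → ℝ → ℝ → ℝ) → (ι → ℝ → ℝ → ℝ)} (hS : ∀ z, Sc E z → Sc E (Φ z)) {L : ℝ} (hL : 0 ≤ L)
    (hc : ∀ z z', Sc E z → Sc E z' → ∀ N, (∀ i x t, 0 < t → |z i x t - z' i x t| ≤ N * exp (L * t)) →
      ∀ i x t, 0 < t → |Φ z i x t - Φ z' i x t| ≤ 1 / 2 * N * exp (L * t)) :
    ∃ w, Sc E w ∧ ∀ i x t, 0 < t → Φ w i x t = w i x t := by
  set z : ℕ → ι → ℝ → ℝ → ℝ := fun n => Φ^[n] (fun _ _ _ => 0) with hz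
  have zs : ∀ n, z (n + 1) = Φ (z n) := fun n => Function.iterate_succ_apply' _ _ _
  have z0 : z 0 = fun _ _ _ => 0 := rfl
  have S0 : Sc E (z 0) := ⟨fun i => continuousOn_const, fun i x t ht => by simpa [z0] using hE0 i x t ht⟩
  have Sn : ∀ n, Sc E (z n) := by
    intro n
    induction n with
    | zero => exact S0
    | succ n ih => rw [zs]; exact hS _ ih
  have D : ∀ n i x t, 0 < t → |z (n + 1) i x t - z n i x t| ≤ (1 / 2) ^ n * exp (L * t) := by
    intro n
    induction n with
    | zero =>
      intro i x t ht
      have h1 := (Sn 1).2 i x t ht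
      have : 1 ≤ exp (L * t) := one_le_exp (by positivity)
      simp only [z0, sub_zero, pow_zero, one_mul, zero_add]
      linarith [hE1 i x t ht]
    | succ n ih =>
      intro i x t ht
      have := hc _ _ (Sn (n + 1)) (Sn n) _ ih i x t ht
      rw [← zs, ← zs] at this
      refine this.trans (le_of_eq ?_)
      rw [pow_succ]; ring
  have D' : ∀ i x t, 0 < t → ∀ n, dist (z n i x t) (z (n + 1) i x t) ≤ exp (L * t) * (1 / 2) ^ n := by
    intro i x t ht n
    rw [dist_comm, Real.dist_eq, mul_comm]
    exact D n i x t ht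
  have lim : ∀ i x t, ∃ l, 0 < t → Tendsto (fun n => z n i x t) atTop (𝓝 l) := by
    intro i x t
    by_cases ht : 0 < t
    · obtain ⟨l, hl⟩ := cauchySeq_tendsto_of_complete (cauchySeq_of_le_geometric _ _ (by norm_num) (D' i x t ht))
      exact ⟨l, fun _ => hl⟩
    · exact ⟨0, fun h => absurd h ht⟩
  choose w hw using lim
  have B : ∀ n i x t, 0 < t → |z n i x t - w i x t| ≤ 2 * (1 / 2) ^ n * exp (L * t) := by
    intro n i x t ht
    have := dist_le_of_le_geometric_of_tendsto _ _ (by norm_num) (D' i x t ht) (hw i x t ht) n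
    rw [Real.dist_eq] at this
    refine this.trans (le_of_eq ?_)
    ring
  have hg : Tendsto (fun n : ℕ => (1 / 2 : ℝ) ^ n) atTop (𝓝 0) := tendsto_pow_atTop_nhds_zero_of_lt_one (by norm_num) (by norm_num)
  have Sw : Sc E w := by
    refine ⟨fun i => ?_, fun i x t ht => le_of_tendsto (hw i x t ht).abs (Eventually.of_forall fun n => (Sn n).2 i x t ht)⟩
    have hu : TendstoLocallyUniformlyOn (fun (n : ℕ) (p : ℝ × ℝ) => z n i p.1 p.2) (fun p => w i p.1 p.2) atTop {p : ℝ × ℝ | 0 < p.2} := by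
      rw [Metric.tendstoLocallyUniformlyOn_iff]
      intro ε hε p hp
      refine ⟨{q | 0 < q.2 ∧ q.2 < p.2 + 1}, ?_, ?_⟩
      · refine mem_nhdsWithin_of_mem_nhds ?_
        have hp' : 0 < p.2 := hp
        have ho : IsOpen {q : ℝ × ℝ | 0 < q.2 ∧ q.2 < p.2 + 1} :=
          (isOpen_lt continuous_const continuous_snd).inter (isOpen_lt continuous_snd continuous_const)
        exact ho.mem_nhds ⟨hp', by linarith⟩
      · have h2 : Tendsto (fun n : ℕ => 2 * (1 / 2 : ℝ) ^ n * exp (L * (p.2 + 1))) atTop (𝓝 0) := by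
          simpa using (hg.const_mul 2).mul_const (exp (L * (p.2 + 1)))
        filter_upwards [h2.eventually_lt_const hε] with n hn q hq
        rw [dist_comm, Real.dist_eq]
        refine ((B n i q.1 q.2 hq.1).trans ?_).trans_lt hn
        have := hq.2.le
        gcongr
    exact hu.continuousOn (Eventually.of_forall fun n => (Sn n).1 i).frequently
  refine ⟨w, Sw, fun i x t ht => ?_⟩
  refine tendsto_nhds_unique (f := fun n => z (n + 1) i x t) (l := atTop) ?_ ((tendsto_add_atTop_iff_nat 1).2 (hw i x t ht))
  rw [tendsto_iff_dist_tendsto_zero]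
  refine squeeze_zero (fun _ => dist_nonneg) (fun n => ?_) (g := fun n : ℕ => (1 / 2 : ℝ) ^ n * exp (L * t)) ?_
  · rw [Real.dist_eq, zs]
    refine (hc _ _ (Sn n) Sw _ (B n) i x t ht).trans (le_of_eq ?_)
    ring
  · simpa using hg.mul_const (exp (L * t))

end HK

namespace HK
open Real Filter Topology

def cp (f : ℝ × ℝ → ℝ) (z : Bool → ℝ → ℝ → ℝ) (x t : ℝ) : ℝ := f (z false x t, z true x t)

lemma box_lip {f : ℝ × ℝ → ℝ} (hf : ContDiff ℝ 1 f) (r : ℝ) : ∃ L, 0 ≤ L ∧ ∀ p q : ℝ × ℝ, ‖p‖ ≤ r → ‖q‖ ≤ r →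
    |f p - f q| ≤ L * ‖p - q‖ := by
  obtain ⟨C, hC⟩ := (isCompact_closedBall (0 : ℝ × ℝ) r).exists_bound_of_continuousOn (f := fderiv ℝ f)
    (hf.continuous_fderiv one_ne_zero).continuousOn
  refine ⟨|C|, abs_nonneg _, fun p q hp hq => ?_⟩
  have := (convex_closedBall (0 : ℝ × ℝ) r).norm_image_sub_le_of_norm_fderiv_le (𝕜 := ℝ) (f := f) (C := |C|)
    (fun x _ => (hf.differentiable one_ne_zero) x) (fun x hx => (hC x hx).trans (le_abs_self _))
    (mem_closedBall_zero_iff.2 hq) (mem_closedBall_zero_iff.2 hp)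
  exact this

section
variable {z : Bool → ℝ → ℝ → ℝ} {r α : ℝ} {f : ℝ × ℝ → ℝ}

lemma nz (hb : ∀ i x t, 0 < t → |z i x t| ≤ r) (x : ℝ) {t : ℝ} (ht : 0 < t) : ‖(z false x t, z true x t)‖ ≤ r :=
  max_le (hb _ _ _ ht) (hb _ _ _ ht)

lemma cp_cont (hf : Continuous f) (hz : ∀ i, Cont (z i)) : Cont (cp f z) :=
  hf.comp_continuousOn ((hz false).prodMk (hz true))

lemma cp_bd (hf : Continuous f) (hb : ∀ i x t, 0 < t → |z i x t| ≤ r) : Bd 0 (cp f z) := by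
  obtain ⟨C, hC⟩ := (isCompact_closedBall (0 : ℝ × ℝ) r).exists_bound_of_continuousOn hf.continuousOn
  intro T hT
  refine ⟨|C|, abs_nonneg _, fun x t ht _ => ?_⟩
  have := hC _ (mem_closedBall_zero_iff.2 (nz hb x ht))
  rw [neg_zero, rpow_zero, mul_one]
  exact this.trans (le_abs_self _)

lemma cp_hol (hf : ContDiff ℝ 1 f) (hb : ∀ i x t, 0 < t → |z i x t| ≤ r) (hh : ∀ i, Hol α 0 (z i)) : Hol α 0 (cp f z) := by
  obtain ⟨L, hL, hl⟩ := box_lip hf r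
  intro T hT
  obtain ⟨A, hA, h1⟩ := hh false T hT
  obtain ⟨A', hA', h1'⟩ := hh true T hT
  refine ⟨L * (A + A'), by positivity, fun x y t ht htT => ?_⟩
  refine (hl _ _ (nz hb x ht) (nz hb y ht)).trans ?_
  rw [mul_assoc, mul_assoc]
  refine mul_le_mul_of_nonneg_left ?_ hL
  rw [← mul_assoc, add_mul, add_mul]
  have e1 := h1 x y t ht htT
  have e2 := h1' x y t ht htT
  have p1 := (abs_nonneg _).trans e1
  have p2 := (abs_nonneg _).trans e2
  refine max_le ?_ ?_
  · refine le_trans ?_ (le_add_of_nonneg_right p2)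
    exact e1
  · refine le_trans ?_ (le_add_of_nonneg_left p1)
    exact e2

end

lemma Cont.mul {h h' : ℝ → ℝ → ℝ} (H : Cont h) (H' : Cont h') : Cont (fun x t => h x t * h' x t) :=
  ContinuousOn.mul H H'

lemma Bd.mul {b : ℝ} {h h' : ℝ → ℝ → ℝ} (H : Bd 0 h) (H' : Bd b h') : Bd b (fun x t => h x t * h' x t) := by
  intro T hT
  obtain ⟨A, hA, h1⟩ := H T hT
  obtain ⟨A', hA', h1'⟩ := H' T hT
  refine ⟨A * A', by positivity, fun x s hs hsT => ?_⟩
  have e := h1 x s hs hsT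
  rw [neg_zero, rpow_zero, mul_one] at e
  rw [abs_mul, mul_assoc]
  exact mul_le_mul e (h1' x s hs hsT) (abs_nonneg _) hA

lemma Hol.mul {α b c : ℝ} {h h' : ℝ → ℝ → ℝ} (B : Bd 0 h) (H : Hol α 0 h) (B' : Bd b h') (hbc : b ≤ c) (H' : Hol α c h') :
    Hol α c (fun x t => h x t * h' x t) := by
  have B'' := B'.weak hbc
  intro T hT
  obtain ⟨A, hA, h1⟩ := H T hT
  obtain ⟨A', hA', h1'⟩ := H' T hT
  obtain ⟨D, hD, b1⟩ := B T hT
  obtain ⟨D', hD', b1'⟩ := B'' T hT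
  refine ⟨D * A' + A * D', by positivity, fun x y s hs hsT => ?_⟩
  have e1 := h1 x y s hs hsT
  have e2 := b1 x s hs hsT
  rw [neg_zero, rpow_zero, mul_one] at e1 e2
  have e3 := h1' x y s hs hsT
  have e4 := b1' y s hs hsT
  have : h x s * h' x s - h y s * h' y s = h x s * (h' x s - h' y s) + (h x s - h y s) * h' y s := by ring
  rw [this]
  refine (abs_add_le _ _).trans ?_
  rw [abs_mul, abs_mul]
  calc _ ≤ D * (A' * |x - y| ^ α * s ^ (-c)) + (A * |x - y| ^ α) * (D' * s ^ (-c)) := by gcongr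
    _ = _ := by ring

lemma bootstrap {α r : ℝ} (hα : 0 < α) (hα1 : α < 1) {d c B A : Bool → ℝ} {u0 : Bool → ℝ → ℝ} {f g : Bool → ℝ × ℝ → ℝ}
    (hd : ∀ i, 0 < d i) (hu : ∀ i, Continuous (u0 i)) (hB : ∀ i x, |u0 i x| ≤ B i)
    (hA : ∀ i x y, |u0 i x - u0 i y| ≤ A i * |x - y| ^ α) (hf : ∀ i, ContDiff ℝ 2 (f i)) (hg : ∀ i, ContDiff ℝ 2 (g i))
    {z U : Bool → ℝ → ℝ → ℝ} (hz : ∀ i, Cont (z i)) (hb : ∀ i x t, 0 < t → |z i x t| ≤ r)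
    (hU : U = fun i => Psi (d i) (c i) (u0 i) (cp (f i) z) (cp (g i) z)) (hfix : ∀ i x t, 0 < t → U i x t = z i x t) :
    ∃ ut ux uxx gx : Bool → ℝ → ℝ → ℝ, ∀ i, Cont (ut i) ∧ Cont (ux i) ∧ Cont (uxx i) ∧ ∀ x t, 0 < t →
      HasDerivAt (fun τ => U i x τ) (ut i x t) t ∧ HasDerivAt (fun ξ => U i ξ t) (ux i x t) x ∧
      HasDerivAt (fun ξ => ux i ξ t) (uxx i x t) x ∧ HasDerivAt (fun ξ => cp (g i) U ξ t) (gx i x t) x ∧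
      ut i x t = d i * uxx i x t + c i * ux i x t + cp (f i) U x t + gx i x t := by
  have hf1 := fun i => (hf i).of_le (m := 1) (by norm_num)
  have hg1 := fun i => (hg i).of_le (m := 1) (by norm_num)
  have cF := fun i => cp_cont (hf i).continuous hz
  have cG := fun i => cp_cont (hg i).continuous hz
  have bF := fun i => cp_bd (hf i).continuous hb
  have bG := fun i => cp_bd (hg i).continuous hb
  have zh : ∀ i, Hol α 0 (z i) := fun i => by
    have := Psi_hol (c := c i) (hd i) hα hα1 (hu i) (hB i) (hA i) (cF i) (bF i) (cG i) (bG i)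
    refine this.congr fun x t ht => ?_
    rw [← hfix i x t ht, hU]
  have hG := fun i => cp_hol (hg1 i) hb zh
  have hF := fun i => cp_hol (hf1 i) hb zh
  have dx := fun i => Psi_dx (c := c i) (hd i) hα hα1 (hu i) (hB i) (cF i) (bF i) (cG i) (bG i) (hG i)
  choose ux ux1 ux2 ux3 using dx
  have zx : ∀ i x t, 0 < t → HasDerivAt (fun ξ => z i ξ t) (ux i x t) x := fun i x t ht => by
    have := ux3 i x t ht
    refine this.congr_of_eventuallyEq (Eventually.of_forall fun ξ => ?_)
    simp only
    rw [← hfix i ξ t ht, hU]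
  set ga1 : Bool → ℝ × ℝ → ℝ := fun i p => fderiv ℝ (g i) p (1, 0) with hga1
  set ga2 : Bool → ℝ × ℝ → ℝ := fun i p => fderiv ℝ (g i) p (0, 1) with hga2
  have k1 : ∀ i, ContDiff ℝ 1 (ga1 i) := fun i =>
    ((hg i).fderiv_right (m := 1) (by norm_num)).clm_apply contDiff_const
  have k2 : ∀ i, ContDiff ℝ 1 (ga2 i) := fun i =>
    ((hg i).fderiv_right (m := 1) (by norm_num)).clm_apply contDiff_const
  set gx : Bool → ℝ → ℝ → ℝ := fun i x t => cp (ga1 i) z x t * ux false x t + cp (ga2 i) z x t * ux true x t with hgx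
  have gxd : ∀ i x t, 0 < t → HasDerivAt (fun ξ => cp (g i) z ξ t) (gx i x t) x := by
    intro i x t ht
    have h1 := ((hg i).differentiable (by norm_num) (z false x t, z true x t)).hasFDerivAt
    have h2 := h1.comp_hasDerivAt x ((zx false x t ht).prodMk (zx true x t ht))
    refine h2.congr_deriv ?_
    have : (ux false x t, ux true x t) = ux false x t • ((1:ℝ), (0:ℝ)) + ux true x t • ((0:ℝ), (1:ℝ)) := by simp
    rw [this, map_add, map_smul, map_smul]
    simp only [hgx, cp, hga1, hga2, smul_eq_mul]; ring
  have cx : ∀ i, Cont (gx i) := fun i =>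
    ((cp_cont (k1 i).continuous hz).mul (ux1 false)).add ((cp_cont (k2 i).continuous hz).mul (ux1 true))
  have bx : ∀ i, Bd (1/2) (gx i) := fun i =>
    ((cp_bd (k1 i).continuous hb).mul (ux2 false)).add ((cp_bd (k2 i).continuous hb).mul (ux2 true))
  have uh : ∀ i, Hol α ((1 + α) / 2) (ux i) := fun i =>
    Psi_dx_hol (c := c i) (hd i) hα hα1 (hu i) (hB i) (cF i) (bF i) (bG i) (cx i) (bx i) (gxd i) (ux3 i)
  have hx : ∀ i, Hol α ((1 + α) / 2) (gx i) := fun i =>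
    (Hol.mul (cp_bd (k1 i).continuous hb) (cp_hol (k1 i) hb zh) (ux2 false) (by linarith) (uh false)).add
    (Hol.mul (cp_bd (k2 i).continuous hb) (cp_hol (k2 i) hb zh) (ux2 true) (by linarith) (uh true))
  have full := fun i => Psi_full (c := c i) (hd i) hα hα1 (hu i) (hB i) (cF i) (bF i) (bG i) (cx i) (bx i) (gxd i)
    (((hF i).weak (by linarith)).add (hx i))
  choose ut vx uxx c1 c2 c3 h using full
  have cpe : ∀ (k : ℝ × ℝ → ℝ) x t, 0 < t → cp k U x t = cp k z x t := fun k x t ht => by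
    simp only [cp, hfix _ x t ht]
  refine ⟨ut, vx, uxx, gx, fun i => ⟨c1 i, c2 i, c3 i, fun x t ht => ?_⟩⟩
  obtain ⟨e1, e2, e3, e4⟩ := h i x t ht
  refine ⟨by rw [hU]; exact e3, by rw [hU]; exact e1, e2, ?_, ?_⟩
  · exact (gxd i x t ht).congr_of_eventuallyEq (Eventually.of_forall fun ξ => cpe _ ξ t ht)
  · rw [cpe _ x t ht]; exact e4

end HK

namespace HK
open Real Filter Topology

lemma solve {r C M : ℝ} {d c : Bool → ℝ} {f g : Bool → ℝ × ℝ → ℝ} (hr : 0 < r) (hC : 0 < C)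
    (hd : ∀ i, 0 < d i) (hc : ∀ i, c i ≠ c (!i)) (hf : ∀ i, ContDiff ℝ 2 (f i)) (hg : ∀ i, ContDiff ℝ 2 (g i))
    (nf : ∀ (i : Bool) (a : Bool → ℝ), (∀ j, |a j| ≤ r) → |f i (a false, a true)| ≤ C * (|a i| ^ 4 + |a i| * |a (!i)|))
    (ng : ∀ (i : Bool) (a : Bool → ℝ), (∀ j, |a j| ≤ r) → |g i (a false, a true)| ≤ C * (|a i| ^ 2 + |a i| * |a (!i)|))
    (hM : ∀ i, 16 * d i ≤ M) {e : ℝ} (he : 0 < e) : ∃ δ, 0 < δ ∧ δ ≤ e ∧ ∀ (u0 : Bool → ℝ → ℝ) (B : Bool → ℝ),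
      (∀ i, Continuous (u0 i)) → (∀ i x, |u0 i x| ≤ B i) → (∀ i b, |u0 i b| ≤ δ * ga M 1 b) →
      ∃ z : Bool → ℝ → ℝ → ℝ, (∀ i, Cont (z i)) ∧ (∀ i x t, 0 < t → |z i x t| ≤ r) ∧
        (∀ i x t, 0 < t → |z i x t| ≤ e * env M (c i) x t) ∧
        ∀ i x t, 0 < t → Psi (d i) (c i) (u0 i) (cp (f i) z) (cp (g i) z) x t = z i x t := by
  have hM0 : 0 ≤ M := by linarith [hM true, hd true]
  choose K hK est using fun i => Psi_env (hd i) (hM i) (hc i)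
  set KK := K false + K true with hKK
  have hKi : ∀ i, K i ≤ KK := by
    intro i; cases i
    · linarith [hK true]
    · linarith [hK false]
  have hKK0 : 0 < KK := add_pos (hK _) (hK _)
  set e' := min (min e 1) (min r (1 / (4 * C * KK))) with he'
  have he'0 : 0 < e' := by rw [he']; positivity
  have e1 : e' ≤ e := (min_le_left _ _).trans (min_le_left _ _)
  have e2 : e' ≤ 1 := (min_le_left _ _).trans (min_le_right _ _)
  have e3 : e' ≤ r := (min_le_right _ _).trans (min_le_left _ _)
  have e4 : e' ≤ 1 / (4 * C * KK) := (min_le_right _ _).trans (min_le_right _ _)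
  rw [le_div_iff₀ (by positivity)] at e4
  set δ := min e' (e' / (2 * KK)) with hδ
  have hδ0 : 0 < δ := by rw [hδ]; positivity
  have d1 : δ ≤ e' / (2 * KK) := min_le_right _ _
  rw [le_div_iff₀ (by positivity)] at d1
  have self : KK * (δ + 2 * C * e' ^ 2) ≤ e' := by nlinarith
  refine ⟨δ, hδ0, (min_le_left _ _).trans e1, fun u0 B hu hB hsm => ?_⟩
  set E : Bool → ℝ → ℝ → ℝ := fun i x t => e' * env M (c i) x t with hE
  have E0 : ∀ i x t, 0 < t → 0 ≤ E i x t := fun i x t _ => mul_nonneg he'0.le (env_nonneg _ _ _ _)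
  have Ee : ∀ i x t, 0 < t → E i x t ≤ e' := fun i x t ht =>
    mul_le_of_le_one_right he'0.le (env_le_one hM0 ht.le)
  have Sr : ∀ z, Sc E z → ∀ i x t, 0 < t → |z i x t| ≤ r := fun z hz i x t ht =>
    ((hz.2 i x t ht).trans (Ee i x t ht)).trans e3
  choose Lf Lf0 lf using fun i => box_lip ((hf i).of_le (m := 1) (by norm_num)) r
  choose Lg Lg0 lg using fun i => box_lip ((hg i).of_le (m := 1) (by norm_num)) r
  have hθ : ∀ i, 0 < 1 / (2 * (Lf i + Lg i + 1)) := fun i => by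
    have := Lf0 i
    have := Lg0 i
    positivity
  choose L0 L00 ct using fun i => Psi_contr (c := c i) (hd i) (hθ i)
  set L := L0 false + L0 true with hL
  have hLi : ∀ i, L0 i ≤ L := by
    intro i; cases i
    · linarith [L00 true]
    · linarith [L00 false]
  have hL0 : 0 ≤ L := (add_pos (L00 _) (L00 _)).le
  have cF : ∀ z, Sc E z → ∀ i, Cont (cp (f i) z) := fun z hz i => cp_cont (hf i).continuous hz.1
  have cG : ∀ z, Sc E z → ∀ i, Cont (cp (g i) z) := fun z hz i => cp_cont (hg i).continuous hz.1
  have bF : ∀ z, Sc E z → ∀ i, Bd 0 (cp (f i) z) := fun z hz i => cp_bd (hf i).continuous (Sr z hz)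
  have bG : ∀ z, Sc E z → ∀ i, Bd 0 (cp (g i) z) := fun z hz i => cp_bd (hg i).continuous (Sr z hz)
  have pic := picard (E := E) E0 (fun i x t ht => (Ee i x t ht).trans e2)
    (Φ := fun z i => Psi (d i) (c i) (u0 i) (cp (f i) z) (cp (g i) z)) (L := L) ?_ hL0 ?_
  · obtain ⟨w, Sw, fix⟩ := pic
    refine ⟨w, Sw.1, Sr w Sw, fun i x t ht => (Sw.2 i x t ht).trans ?_, fix⟩
    exact mul_le_mul_of_nonneg_right e1 (env_nonneg _ _ _ _)
  · intro z hz
    refine ⟨fun i => Psi_cont (hd i) (hu i) (hB i) (cF z hz i) (bF z hz i) (cG z hz i) (bG z hz i), fun i x t ht => ?_⟩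
    have := est i (u0 i) (cp (f i) z) (cp (g i) z) (z i) (z (!i)) δ C e' hC.le he'0.le e2 (hsm i) (hz.2 i) (hz.2 (!i))
      (fun x t ht => nf i (fun j => z j x t) fun j => Sr z hz j x t ht)
      (fun x t ht => ng i (fun j => z j x t) fun j => Sr z hz j x t ht) x t ht
    refine this.trans ?_
    have hEn := env_nonneg M (c i) x t
    calc _ ≤ KK * (δ + 2 * C * e' ^ 2) * env M (c i) x t := by gcongr; exact hKi i
      _ ≤ _ := by simp only [hE]; gcongr
  · intro z z' hz hz' N hN i x t ht
    have hN0 : 0 ≤ N := by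
      have := (abs_nonneg _).trans (hN true 0 1 one_pos)
      exact nonneg_of_mul_nonneg_left this (exp_pos _)
    have hnorm : ∀ y s, 0 < s → ‖(z false y s, z true y s) - (z' false y s, z' true y s)‖ ≤ N * exp (L * s) :=
      fun y s hs => max_le (hN false y s hs) (hN true y s hs)
    have p1 := Lf0 i
    have p2 := Lg0 i
    have := ct i L (hLi i) (u0 i) (cp (f i) z) (cp (g i) z) (cp (f i) z') (cp (g i) z') ((Lf i + Lg i + 1) * N)
      (cF z hz i) (bF z hz i) (cG z hz i) (bG z hz i) (cF z' hz' i) (bF z' hz' i) (cG z' hz' i) (bG z' hz' i)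
      (fun y s hs => by
        refine (lf i _ _ (nz (Sr z hz) y hs) (nz (Sr z' hz') y hs)).trans ?_
        rw [mul_assoc]
        refine mul_le_mul (by linarith) (hnorm y s hs) (norm_nonneg _) (by positivity))
      (fun y s hs => by
        refine (lg i _ _ (nz (Sr z hz) y hs) (nz (Sr z' hz') y hs)).trans ?_
        rw [mul_assoc]
        refine mul_le_mul (by linarith) (hnorm y s hs) (norm_nonneg _) (by positivity)) x t ht
    refine this.trans (le_of_eq ?_)
    field_simp

lemma env_int {M c t : ℝ} (hM : 0 < M) (ht : 0 ≤ t) : Integrable (fun x => env M c x t) ∧ ∫ x, env M c x t = √(π * M) := by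
  have h1 : 0 < 1 + t := by linarith
  obtain ⟨i, I⟩ := gauss_aff (β := 1 / (M * (1 + t))) (by positivity) (one_ne_zero) (c * t)
  have e : ∀ x, env M c x t = (√(1 + t))⁻¹ * exp (-(1 / (M * (1 + t))) * (c * t + 1 * x) ^ 2) := fun x => by
    rw [env, ga]; congr 2; ring
  simp only [e]
  refine ⟨i.const_mul _, ?_⟩
  rw [integral_const_mul, I, abs_one, div_one]
  have : √(π / (1 / (M * (1 + t)))) = √(π * M) * √(1 + t) := by
    rw [← sqrt_mul (by positivity)]; congr 1; field_simp
  rw [this]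
  have : 0 < √(1 + t) := by positivity
  field_simp

lemma holder_cont {α : ℝ} (hα : 0 < α) {u : ℝ → ℝ} {A : ℝ} (h : ∀ x y, |u x - u y| ≤ A * |x - y| ^ α) : Continuous u := by
  rw [continuous_iff_continuousAt]
  intro y
  rw [ContinuousAt, tendsto_iff_dist_tendsto_zero]
  refine squeeze_zero (fun _ => dist_nonneg) (fun x => h x y) ?_
  have h1 : Continuous (fun x : ℝ => A * |x - y| ^ α) :=
    continuous_const.mul ((continuous_abs.comp (continuous_id.sub continuous_const)).rpow_const fun x => Or.inr hα.le)
  have := h1.tendsto y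
  simpa [zero_rpow hα.ne'] using this

end HK

open HK in
lemma HK.main (α : ℝ) (hα : α ∈ Set.Ioo (0 : ℝ) 1) {r C M : ℝ} {d c : Bool → ℝ} {f g : Bool → ℝ × ℝ → ℝ} (hr : 0 < r) (hC : 0 < C)
    (hd : ∀ i, 0 < d i) (hc : ∀ i, c i ≠ c (!i)) (hf : ∀ i, ContDiff ℝ 2 (f i)) (hg : ∀ i, ContDiff ℝ 2 (g i))
    (nf : ∀ (i : Bool) (a : Bool → ℝ), (∀ j, |a j| ≤ r) → |f i (a false, a true)| ≤ C * (|a i| ^ 4 + |a i| * |a (!i)|))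
    (ng : ∀ (i : Bool) (a : Bool → ℝ), (∀ j, |a j| ≤ r) → |g i (a false, a true)| ≤ C * (|a i| ^ 2 + |a i| * |a (!i)|))
    (hM : ∀ i, 16 * d i ≤ M) {ε : ℝ} (hε : 0 < ε) : ∃ δ, 0 < δ ∧ ∀ (u0 : Bool → ℝ → ℝ),
      (∀ i, ∃ B, ∀ x, |u0 i x| ≤ B) → (∀ i, HolderCont α (u0 i)) → (∀ i x, |u0 i x| * Real.exp (x ^ 2 / M) < δ) →
      ∃ U : Bool → ℝ → ℝ → ℝ, IsClassicalSolution (d false) (d true) (c false) (c true) (f false) (f true) (g false) (g true)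
        ⊤ (u0 false) (u0 true) (U false) (U true) ∧ ∀ t, 0 ≤ t →
        (∀ i x, |U i x t| ≤ ε * Real.exp (-(x + c i * t) ^ 2 / (M * (1 + t))) / Real.sqrt (1 + t)) ∧
        (∀ x : ℝ, |U false x t| + |U true x t| ≤ ε / Real.sqrt (1 + t)) ∧
        Integrable (fun x : ℝ => |U false x t| + |U true x t|) ∧
        (∫ x : ℝ, (|U false x t| + |U true x t|)) ≤ ε := by
  have hM0 : 0 < M := by linarith [hM true, hd true]
  set R := Real.sqrt (Real.pi * M) with hR
  have hR0 : 0 ≤ R := Real.sqrt_nonneg _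
  set e := min (ε / 2) (ε / (2 * R + 2)) with he
  have he0 : 0 < e := by rw [he]; positivity
  have e1 : e ≤ ε / 2 := min_le_left _ _
  have e2 : e ≤ ε / (2 * R + 2) := min_le_right _ _
  rw [le_div_iff₀ (by positivity)] at e2
  obtain ⟨δ, hδ, hδe, key⟩ := solve hr hC hd hc hf hg nf ng hM he0
  refine ⟨δ, hδ, fun u0 hB hH hsm => ?_⟩
  choose B hB using hB
  choose A hA using hH
  have hu : ∀ i, Continuous (u0 i) := fun i => holder_cont hα.1 (hA i)
  have sm : ∀ i b, |u0 i b| ≤ δ * ga M 1 b := fun i b => by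
    have := hsm i b
    rw [← lt_div_iff₀ (Real.exp_pos _)] at this
    rw [ga, Real.exp_neg, mul_one]
    exact this.le
  obtain ⟨z, hz, hb, henv, fix⟩ := key u0 B hu hB sm
  obtain ⟨U, hU⟩ : ∃ U : Bool → ℝ → ℝ → ℝ, U = fun i => Psi (d i) (c i) (u0 i) (cp (f i) z) (cp (g i) z) := ⟨_, rfl⟩
  have hfix : ∀ i x t, 0 < t → U i x t = z i x t := fun i x t ht => by rw [hU]; exact fix i x t ht
  have U0 : ∀ i x, U i x 0 = u0 i x := fun i x => by rw [hU]; exact Psi_zero (hd i) x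
  have Uc : ∀ i, ContinuousOn (fun p : ℝ × ℝ => U i p.1 p.2) {p | 0 ≤ p.2} := fun i => by
    rw [hU]
    exact Psi_cont0 (hd i) (hu i) (hB i) (cp_cont (hf i).continuous hz) (cp_bd (hf i).continuous hb)
      (cp_cont (hg i).continuous hz) (cp_bd (hg i).continuous hb)
  have Ue : ∀ i x t, 0 ≤ t → |U i x t| ≤ e * env M (c i) x t := fun i x t ht => by
    rcases ht.lt_or_eq with h | h
    · rw [hfix i x t h]; exact henv i x t h
    · subst h
      rw [U0]
      refine (sm i x).trans ?_
      have := ga_pos M 1 x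
      simp only [env, add_zero, Real.sqrt_one, inv_one, one_mul, mul_zero]
      gcongr
  obtain ⟨ut, ux, uxx, gx, H⟩ := bootstrap hα.1 hα.2 hd hu hB hA hf hg hz hb hU hfix
  refine ⟨U, ⟨U0 false, U0 true, ?_, ?_, ut false, ut true, ux false, ux true, uxx false, uxx true, gx false, gx true, ?_, ?_⟩, fun t ht => ?_⟩
  · exact ((Uc false).prodMk (Uc true)).mono fun p hp => hp.1
  · intro t1 _ _
    refine ⟨e + e, fun x t ht _ => ?_⟩
    have h1 := fun i => (Ue i x t ht).trans (mul_le_of_le_one_right he0.le (env_le_one hM0.le ht))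
    exact add_le_add (h1 false) (h1 true)
  · intro x t ht _
    obtain ⟨-, -, -, h1⟩ := H false
    obtain ⟨-, -, -, h2⟩ := H true
    obtain ⟨a1, a2, a3, a4, a5⟩ := h1 x t ht
    obtain ⟨b1, b2, b3, b4, b5⟩ := h2 x t ht
    exact ⟨a1, a2, a3, a4, b1, b2, b3, b4, a5, b5⟩
  · obtain ⟨a1, a2, a3, -⟩ := H false
    obtain ⟨b1, b2, b3, -⟩ := H true
    exact (a1.prodMk (a2.prodMk (a3.prodMk (b1.prodMk (b2.prodMk b3))))).mono fun p hp => hp.1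
  · have hs : 0 < Real.sqrt (1 + t) := Real.sqrt_pos.2 (by linarith)
    have i1 := fun i => env_int (c := c i) hM0 ht
    have slice : ∀ i, Continuous (fun x => U i x t) := fun i =>
      (Uc i).comp_continuous (f := fun x => ((x, t) : ℝ × ℝ)) (by fun_prop) (fun x => ht)
    have ii : ∀ i, Integrable (fun x => |U i x t|) := fun i => by
      refine ((i1 i).1.const_mul e).mono' (slice i).abs.aestronglyMeasurable (Filter.Eventually.of_forall fun x => ?_)
      rw [Real.norm_eq_abs, abs_abs]
      exact Ue i x t ht
    have iI : ∀ i, ∫ x, |U i x t| ≤ e * R := fun i => by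
      rw [hR, ← (i1 i).2, ← integral_const_mul]
      exact integral_mono (ii i) ((i1 i).1.const_mul e) fun x => Ue i x t ht
    refine ⟨fun i x => ?_, fun x => ?_, (ii false).add (ii true), ?_⟩
    · refine (Ue i x t ht).trans ?_
      have h0 := env_nonneg M (c i) x t
      calc _ ≤ ε * env M (c i) x t := by gcongr; linarith
        _ = _ := by rw [env, ga, neg_div]; ring
    · have h1 := fun i => (Ue i x t ht).trans (mul_le_mul_of_nonneg_left (env_le hM0.le ht) he0.le)
      calc _ ≤ e * (Real.sqrt (1 + t))⁻¹ + e * (Real.sqrt (1 + t))⁻¹ := add_le_add (h1 false) (h1 true)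
        _ = (e + e) * (Real.sqrt (1 + t))⁻¹ := by ring
        _ ≤ ε * (Real.sqrt (1 + t))⁻¹ := by gcongr; linarith
        _ = _ := by rw [div_eq_mul_inv]
    · rw [integral_add (ii false) (ii true)]
      have := add_le_add (iI false) (iI true)
      linarith

/-- Theorem 1.2 (exponentially localized initial data). -/
theorem global_existence_mix_terms_exponential
    (α d₁ d₂ c₁ c₂ : ℝ) (hα : α ∈ Set.Ioo (0 : ℝ) 1)
    (hd₁ : 0 < d₁) (hd₂ : 0 < d₂) (hc : c₁ ≠ c₂)
    (f₁ f₂ g₁ g₂ : ℝ × ℝ → ℝ)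
    (hf₁ : IsC2Holder α f₁) (hf₂ : IsC2Holder α f₂)
    (hg₁ : IsC2Holder α g₁) (hg₂ : IsC2Holder α g₂)
    (C₀ r₀ : ℝ) (hC₀ : 1 < C₀) (hr₀ : 0 < r₀)
    (hnl : ∀ u v : ℝ, |u| ≤ r₀ → |v| ≤ r₀ →
      |f₁ (u, v)| ≤ C₀ * (|u| ^ 4 + |u| * |v|) ∧
      |g₁ (u, v)| ≤ C₀ * (|u| ^ 2 + |u| * |v|) ∧
      |f₂ (u, v)| ≤ C₀ * (|v| ^ 4 + |u| * |v|) ∧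
      |g₂ (u, v)| ≤ C₀ * (|v| ^ 2 + |u| * |v|)) :
    ∃ M₀ : ℝ, 1 ≤ M₀ ∧
      ∀ M : ℝ, M₀ ≤ M → ∀ ε : ℝ, 0 < ε → ∃ δ : ℝ, 0 < δ ∧
        ∀ u₀ v₀ : ℝ → ℝ,
          (∃ B : ℝ, ∀ x : ℝ, |u₀ x| ≤ B) → (∃ B : ℝ, ∀ x : ℝ, |v₀ x| ≤ B) →
          HolderCont α u₀ → HolderCont α v₀ →
          (∀ x : ℝ, |u₀ x| * Real.exp (x ^ 2 / M) < δ) →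
          (∀ x : ℝ, |v₀ x| * Real.exp (x ^ 2 / M) < δ) →
          ∃ u v : ℝ → ℝ → ℝ,
            IsClassicalSolution d₁ d₂ c₁ c₂ f₁ f₂ g₁ g₂ ⊤ u₀ v₀ u v ∧
            ∀ t : ℝ, 0 ≤ t →
              (∀ x : ℝ, |u x t| ≤
                ε * Real.exp (-(x + c₁ * t) ^ 2 / (M * (1 + t))) / Real.sqrt (1 + t)) ∧
              (∀ x : ℝ, |v x t| ≤
                ε * Real.exp (-(x + c₂ * t) ^ 2 / (M * (1 + t))) / Real.sqrt (1 + t)) ∧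
              (∀ x : ℝ, |u x t| + |v x t| ≤ ε / Real.sqrt (1 + t)) ∧
              Integrable (fun x : ℝ => |u x t| + |v x t|) ∧
              (∫ x : ℝ, (|u x t| + |v x t|)) ≤ ε := by
  refine ⟨max 1 (max (16 * d₁) (16 * d₂)), le_max_left _ _, fun M hM ε hε => ?_⟩
  obtain ⟨δ, hδ, key⟩ := HK.main α hα (r := r₀) (C := C₀) (M := M) (d := fun i => cond i d₂ d₁)
    (c := fun i => cond i c₂ c₁) (f := fun i => cond i f₂ f₁) (g := fun i => cond i g₂ g₁) hr₀ (by linarith)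
    (by rintro (_ | _); exacts [hd₁, hd₂]) (by rintro (_ | _); exacts [hc, hc.symm])
    (by rintro (_ | _); exacts [hf₁.1, hf₂.1]) (by rintro (_ | _); exacts [hg₁.1, hg₂.1])
    (by
      rintro (_ | _) a ha
      · exact (hnl _ _ (ha false) (ha true)).1
      · refine (hnl _ _ (ha false) (ha true)).2.2.1.trans (le_of_eq ?_)
        simp only [Bool.not_true]; ring)
    (by
      rintro (_ | _) a ha
      · exact (hnl _ _ (ha false) (ha true)).2.1
      · refine (hnl _ _ (ha false) (ha true)).2.2.2.trans (le_of_eq ?_)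
        simp only [Bool.not_true]; ring)
    (by
      rintro (_ | _)
      · exact ((le_max_left _ _).trans (le_max_right _ _)).trans hM
      · exact ((le_max_right _ _).trans (le_max_right _ _)).trans hM) hε
  refine ⟨δ, hδ, fun u₀ v₀ bu bv hu hv su sv => ?_⟩
  obtain ⟨U, hU, est⟩ := key (fun i => cond i v₀ u₀) (by rintro (_ | _); exacts [bu, bv])
    (by rintro (_ | _); exacts [hu, hv]) (by rintro (_ | _); exacts [su, sv])
  refine ⟨U false, U true, hU, fun t ht => ?_⟩
  obtain ⟨h1, h2, h3, h4⟩ := est t ht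
  exact ⟨h1 false, h1 true, h2, h3, h4⟩
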